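/- Over k = ℝ, the reduced Betti numbers of the complement of an arrangement X of linear subspaces in ℝ^n satisfy dim_ℚ H̃_i(ℝ^n \ X; ℚ) = Σ_p dim_ℚ H̃_{h(p)-i-2}(K(>p); ℚ), where the sum runs over the intersection poset P(X), h(p) is the codimension of the subspace corresponding to p, and K(>p) is the order complex of {q ∈ P(X) : q > p}. -/

import Mathlib

/-- Chains of `m` elements of a preorder `P`: strictly increasing `m`-tuples. These are the
`(m-1)`-simplices of the order complex `K(P)`; for `m = 0` there is exactly one (empty) chain. -/
@[reducible] def pchains (P : Type*) [Preorder P] (m : ℕ) : Type _ :=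
  {f : Fin m → P // StrictMono f}

/-- The boundary map of the augmented simplicial chain complex of the order complex of `P`
with coefficients in `M`: the alternating sum over deletions of a vertex.  In degree `0`
this is the augmentation onto `pchains P 0 →₀ M ≃ M`. -/
noncomputable def simpBdry (A : Type*) [CommRing A] (M : Type*) [AddCommGroup M] [Module A M]
    (P : Type*) [Preorder P] (m : ℕ) :
    (pchains P (m + 1) →₀ M) →ₗ[A] (pchains P m →₀ M) :=
  Finsupp.lsum ℕ fun c =>
    ∑ i : Fin (m + 1), ((-1 : A) ^ (i : ℕ)) •
      (Finsupp.lsingle (⟨c.1 ∘ i.succAbove, c.2.comp (Fin.strictMono_succAbove i)⟩ : pchains P m))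

/-- Cycles of the augmented simplicial chain complex (everything in lowest degree). -/
noncomputable def simpCycles (A : Type*) [CommRing A] (M : Type*) [AddCommGroup M] [Module A M]
    (P : Type*) [Preorder P] : (m : ℕ) → Submodule A (pchains P m →₀ M)
  | 0 => ⊤
  | (m + 1) => LinearMap.ker (simpBdry A M P m)

/-- `simpHomology A M P m` is the reduced simplicial homology `H̃_{m-1}(K(P); M)` of the order
complex of `P` with coefficients in the `A`-module `M`, computed from the augmented chain
complex; with this convention `H̃_{-1}(∅; M) = M` (the case `m = 0`, `P = ∅`). -/
@[reducible] noncomputable def simpHomology (A : Type*) [CommRing A] (M : Type*) [AddCommGroup M] [Module A M]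
    (P : Type*) [Preorder P] (m : ℕ) : Type _ :=
  ↥(simpCycles A M P m) ⧸
    (Submodule.comap (simpCycles A M P m).subtype (LinearMap.range (simpBdry A M P m)))

open CategoryTheory

/-- The singular chain complex of a topological space with rational coefficients: the
alternating face map complex of the levelwise free `ℚ`-module on the singular simplicial
set. -/
noncomputable def singChainsQ (X : TopCat) : ChainComplex (ModuleCat ℚ) ℕ :=
  (AlgebraicTopology.alternatingFaceMapComplex (ModuleCat ℚ)).obj
    (((SimplicialObject.whiskering _ _).obj (ModuleCat.free ℚ)).obj (TopCat.toSSet.obj X))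

/-- Singular homology with rational coefficients. -/
noncomputable def singHomQ (X : TopCat) (i : ℕ) : ModuleCat ℚ :=
  (singChainsQ X).homology i

namespace GM
open Finsupp

/-! ### Ordered tuples: boundary, cone, subdivision -/

/-- Boundary on tuples. -/
noncomputable def bd {K : Type} (m : ℕ) : ((Fin (m+1) → K) →₀ ℚ) →ₗ[ℚ] ((Fin m → K) →₀ ℚ) :=
  Finsupp.linearCombination ℚ
    (fun v => ∑ i : Fin (m+1), ((-1 : ℚ)^(i:ℕ)) • Finsupp.single (v ∘ i.succAbove) (1:ℚ))

noncomputable def cone {K : Type} (b : K) (m : ℕ) :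
    ((Fin m → K) →₀ ℚ) →ₗ[ℚ] ((Fin (m+1) → K) →₀ ℚ) :=
  Finsupp.linearCombination ℚ
    (fun v => Finsupp.single (Fin.cons b v : Fin (m+1) → K) (1:ℚ))

theorem bd_single {K : Type} (m : ℕ) (v : Fin (m+1) → K) :
    bd m (Finsupp.single v 1) =
      ∑ i : Fin (m+1), ((-1 : ℚ)^(i:ℕ)) • Finsupp.single (v ∘ i.succAbove) (1:ℚ) := by
  simp [bd]

theorem cone_single {K : Type} (b : K) (m : ℕ) (v : Fin m → K) :
    cone b m (Finsupp.single v 1) = Finsupp.single (Fin.cons b v : Fin (m+1) → K) (1:ℚ) := by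
  simp [cone]

theorem lin_ext {A M : Type} [AddCommGroup M] [Module ℚ M] {f g : (A →₀ ℚ) →ₗ[ℚ] M}
    (h : ∀ a, f (Finsupp.single a 1) = g (Finsupp.single a 1)) : f = g := by
  apply Finsupp.lhom_ext'
  intro a
  apply LinearMap.ext_ring
  exact h a

theorem cons_comp_succ {K : Type} (b : K) (m : ℕ) (v : Fin (m+1) → K) (i : Fin (m+1)) :
    (Fin.cons b v : Fin (m+2) → K) ∘ (Fin.succAbove i.succ) =
      (Fin.cons b (v ∘ i.succAbove) : Fin (m+1) → K) := by
  funext j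
  refine Fin.cases ?_ (fun j => ?_) j
  · simp
  · simp [Fin.succ_succAbove_succ]

theorem cons_comp_zero {K : Type} (b : K) (m : ℕ) (v : Fin m → K) :
    (Fin.cons b v : Fin (m+1) → K) ∘ (Fin.succAbove 0) = v := by
  funext j
  simp

theorem bd_cone {K : Type} (b : K) (m : ℕ) (c : (Fin (m+1) → K) →₀ ℚ) :
    bd (m+1) (cone b (m+1) c) = c - cone b m (bd m c) := by
  have : (bd (m+1)).comp (cone b (m+1)) = LinearMap.id - (cone b m).comp (bd (K := K) m) := by
    apply lin_ext
    intro v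
    simp only [LinearMap.comp_apply, LinearMap.sub_apply, LinearMap.id_apply, cone_single,
      bd_single, map_sum, map_smul]
    rw [Fin.sum_univ_succ, cons_comp_zero]
    simp only [cons_comp_succ, Fin.val_zero, pow_zero, one_smul, Fin.val_succ, pow_succ]
    simp [Finset.sum_neg_distrib, sub_eq_add_neg]
  exact LinearMap.congr_fun this c

theorem bd_cone_zero {K : Type} (b : K) (c : (Fin 0 → K) →₀ ℚ) :
    bd 0 (cone b 0 c) = c := by
  have : (bd 0).comp (cone b 0) = (LinearMap.id : ((Fin 0 → K) →₀ ℚ) →ₗ[ℚ] _) := by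
    apply lin_ext
    intro v
    simp only [LinearMap.comp_apply, LinearMap.id_apply, cone_single, bd_single]
    simp only [Fin.sum_univ_succ, cons_comp_zero]
    simp
  exact LinearMap.congr_fun this c

theorem bd_bd {K : Type} (m : ℕ) (c : (Fin (m+2) → K) →₀ ℚ) : bd m (bd (m+1) c) = 0 := by
  have : (bd m).comp (bd (m+1)) = (0 : ((Fin (m+2) → K) →₀ ℚ) →ₗ[ℚ] _) := by
    clear c
    induction m with
    | zero =>
      apply lin_ext
      intro v
      simp only [LinearMap.comp_apply, LinearMap.zero_apply]
      rw [← Fin.cons_self_tail v, ← cone_single, bd_cone, map_sub, bd_cone_zero, sub_self]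
    | succ m ih =>
      apply lin_ext
      intro v
      simp only [LinearMap.comp_apply, LinearMap.zero_apply]
      rw [← Fin.cons_self_tail v, ← cone_single, bd_cone, map_sub, bd_cone]
      have := LinearMap.congr_fun ih (Finsupp.single (Fin.tail v) 1)
      simp only [LinearMap.comp_apply, LinearMap.zero_apply] at this
      rw [this]; simp
  exact LinearMap.congr_fun this c

/-- The universal form of `∂∂ = 0`. -/
theorem double_sum {M : Type} [AddCommGroup M] [Module ℚ M] (m : ℕ)
    (F : (Fin m → Fin (m+2)) → M) :
    ∑ i : Fin (m+2), ((-1 : ℚ)^(i:ℕ)) • ∑ j : Fin (m+1), ((-1 : ℚ)^(j:ℕ)) •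
      F (i.succAbove ∘ j.succAbove) = 0 := by
  have h := congrArg (Finsupp.linearCombination ℚ F)
    (bd_bd m (Finsupp.single (id : Fin (m+2) → Fin (m+2)) 1))
  simp only [bd_single, map_sum, map_smul, Finsupp.linearCombination_single, one_smul,
    map_zero] at h
  exact h

section Sub
variable {K : Type} (b : ∀ m : ℕ, (Fin (m+1) → K) → K)

noncomputable def sd : ∀ m : ℕ, ((Fin m → K) →₀ ℚ) →ₗ[ℚ] ((Fin m → K) →₀ ℚ)
  | 0 => LinearMap.id
  | m+1 => Finsupp.linearCombination ℚ
      (fun v => cone (b m v) m (sd m (bd m (Finsupp.single v 1))))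

noncomputable def TT : ∀ m : ℕ, ((Fin m → K) →₀ ℚ) →ₗ[ℚ] ((Fin (m+1) → K) →₀ ℚ)
  | 0 => 0
  | m+1 => Finsupp.linearCombination ℚ
      (fun v => cone (b m v) (m+1) (Finsupp.single v 1 - TT m (bd m (Finsupp.single v 1))))

theorem sd_single (m : ℕ) (v : Fin (m+1) → K) :
    sd b (m+1) (Finsupp.single v 1) = cone (b m v) m (sd b m (bd m (Finsupp.single v 1))) := by
  simp [sd]

theorem TT_single (m : ℕ) (v : Fin (m+1) → K) :
    TT b (m+1) (Finsupp.single v 1) = cone (b m v) (m+1)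
      (Finsupp.single v 1 - TT b m (bd m (Finsupp.single v 1))) := by
  simp [TT]

theorem bd_sd (m : ℕ) (c : (Fin (m+1) → K) →₀ ℚ) :
    bd m (sd b (m+1) c) = sd b m (bd m c) := by
  have : (bd m).comp (sd b (m+1)) = (sd b m).comp (bd m) := by
    clear c
    induction m with
    | zero =>
      apply lin_ext
      intro v
      simp only [LinearMap.comp_apply, sd_single]
      rw [bd_cone_zero]
    | succ m ih =>
      apply lin_ext
      intro v
      simp only [LinearMap.comp_apply]
      rw [sd_single, bd_cone]
      have := LinearMap.congr_fun ih (bd (m+1) (Finsupp.single v 1))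
      simp only [LinearMap.comp_apply] at this
      rw [this, bd_bd]; simp
  exact LinearMap.congr_fun this c

theorem bd_TT (m : ℕ) (c : (Fin (m+1) → K) →₀ ℚ) :
    bd (m+1) (TT b (m+1) c) + TT b m (bd m c) = c - sd b (m+1) c := by
  have : (bd (m+1)).comp (TT b (m+1)) + (TT b m).comp (bd m) = LinearMap.id - sd b (m+1) := by
    clear c
    induction m with
    | zero =>
      apply lin_ext
      intro v
      simp only [LinearMap.comp_apply, LinearMap.add_apply, LinearMap.sub_apply,
        LinearMap.id_apply]
      rw [TT_single, bd_cone, sd_single]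
      simp [TT, sd]
    | succ m ih =>
      apply lin_ext
      intro v
      simp only [LinearMap.comp_apply, LinearMap.add_apply, LinearMap.sub_apply,
        LinearMap.id_apply]
      rw [TT_single, bd_cone, sd_single]
      have := LinearMap.congr_fun ih (bd (m+1) (Finsupp.single v 1))
      simp only [LinearMap.comp_apply, LinearMap.add_apply, LinearMap.sub_apply,
        LinearMap.id_apply, bd_bd, map_zero, add_zero] at this
      simp only [map_sub, this]
      abel
  exact LinearMap.congr_fun this c

noncomputable def DD (k m : ℕ) : ((Fin m → K) →₀ ℚ) →ₗ[ℚ] ((Fin (m+1) → K) →₀ ℚ) :=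
  ∑ i ∈ Finset.range k, (TT b m).comp ((sd b m)^i)

theorem bd_sd_pow (m k : ℕ) (c : (Fin (m+1) → K) →₀ ℚ) :
    bd m ((sd b (m+1) ^ k) c) = (sd b m ^ k) (bd m c) := by
  induction k with
  | zero => simp
  | succ k ih => rw [pow_succ', pow_succ', Module.End.mul_apply, Module.End.mul_apply, bd_sd, ih]

theorem bd_DD (k m : ℕ) (c : (Fin (m+1) → K) →₀ ℚ) :
    bd (m+1) (DD b k (m+1) c) + DD b k m (bd m c) = c - (sd b (m+1) ^ k) c := by
  induction k with
  | zero => simp [DD]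
  | succ k ih =>
    have h1 : ∀ m, DD b (k+1) m = DD b k m + (TT b m).comp ((sd b m)^k) := fun m => by
      simp [DD, Finset.sum_range_succ]
    have h2 := bd_TT b m ((sd b (m+1) ^ k) c)
    rw [h1, h1, LinearMap.add_apply, LinearMap.add_apply, map_add, LinearMap.comp_apply,
      LinearMap.comp_apply, pow_succ', Module.End.mul_apply]
    rw [bd_sd_pow] at h2
    rw [add_add_add_comm, ih, h2]
    abel

/-- naturality -/
noncomputable def mp {K K' : Type} (φ : K → K') (m : ℕ) :
    ((Fin m → K) →₀ ℚ) →ₗ[ℚ] ((Fin m → K') →₀ ℚ) :=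
  Finsupp.linearCombination ℚ (fun v => Finsupp.single (φ ∘ v) (1:ℚ))

theorem mp_single {K K' : Type} (φ : K → K') (m : ℕ) (v : Fin m → K) :
    mp φ m (Finsupp.single v 1) = Finsupp.single (φ ∘ v) (1:ℚ) := by simp [mp]

theorem mp_bd {K K' : Type} (φ : K → K') (m : ℕ) (c : (Fin (m+1) → K) →₀ ℚ) :
    mp φ m (bd m c) = bd m (mp φ (m+1) c) := by
  have : (mp φ m).comp (bd m) = (bd m).comp (mp φ (m+1)) := by
    apply lin_ext
    intro v
    simp only [LinearMap.comp_apply, bd_single, mp_single, map_sum, map_smul]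
    rfl
  exact LinearMap.congr_fun this c

theorem mp_cone {K K' : Type} (φ : K → K') (x : K) (m : ℕ) (c : (Fin m → K) →₀ ℚ) :
    mp φ (m+1) (cone x m c) = cone (φ x) m (mp φ m c) := by
  have : (mp φ (m+1)).comp (cone x m) = (cone (φ x) m).comp (mp φ m) := by
    apply lin_ext
    intro v
    simp only [LinearMap.comp_apply, cone_single, mp_single]
    congr 1
    funext j
    refine Fin.cases ?_ (fun j => ?_) j <;> simp
  exact LinearMap.congr_fun this c

variable {K' : Type} (b' : ∀ m : ℕ, (Fin (m+1) → K') → K') (φ : K → K')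

theorem mp_sd (hφ : ∀ m v, φ (b m v) = b' m (φ ∘ v))
     (m : ℕ) (c : (Fin m → K) →₀ ℚ) : mp φ m (sd b m c) = sd b' m (mp φ m c) := by
  have : (mp φ m).comp (sd b m) = (sd b' m).comp (mp φ m) := by
    clear c
    induction m with
    | zero => rfl
    | succ m ih =>
      apply lin_ext
      intro v
      have := LinearMap.congr_fun ih (bd m (Finsupp.single v 1))
      simp only [LinearMap.comp_apply] at this ⊢
      rw [sd_single, mp_cone, this, mp_bd, mp_single, sd_single, hφ]
  exact LinearMap.congr_fun this c

theorem mp_TT (hφ : ∀ m v, φ (b m v) = b' m (φ ∘ v))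
     (m : ℕ) (c : (Fin m → K) →₀ ℚ) :
    mp φ (m+1) (TT b m c) = TT b' m (mp φ m c) := by
  have : (mp φ (m+1)).comp (TT b m) = (TT b' m).comp (mp φ m) := by
    clear c
    induction m with
    | zero => simp [TT]
    | succ m ih =>
      apply lin_ext
      intro v
      have := LinearMap.congr_fun ih (bd m (Finsupp.single v 1))
      simp only [LinearMap.comp_apply] at this ⊢
      rw [TT_single, mp_cone, map_sub, this, mp_bd, mp_single, TT_single, hφ]
  exact LinearMap.congr_fun this c

theorem mp_sd_pow (hφ : ∀ m v, φ (b m v) = b' m (φ ∘ v))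
     (k m : ℕ) (c : (Fin m → K) →₀ ℚ) :
    mp φ m ((sd b m ^ k) c) = (sd b' m ^ k) (mp φ m c) := by
  induction k with
  | zero => simp
  | succ k ih =>
    rw [pow_succ', pow_succ', Module.End.mul_apply, Module.End.mul_apply, mp_sd b b' φ hφ, ih]

end Sub
end GM

namespace GM
open Finsupp

/-! ### The standard simplex as a convex space -/

/-- Standard topological simplex. -/
abbrev Dl (N : ℕ) : Type := stdSimplex ℝ (Fin (N+1))

noncomputable def comb {m N : ℕ} (v : Fin (m+1) → Dl N) (t : Dl m) : Dl N :=
  ⟨fun x => ∑ j, t j * v j x, fun x => Finset.sum_nonneg fun j _ =>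
    mul_nonneg (stdSimplex.zero_le t j) (stdSimplex.zero_le (v j) x), by
    rw [Finset.sum_comm]
    simp only [← Finset.mul_sum, stdSimplex.sum_eq_one, mul_one]⟩

theorem comb_apply {m N : ℕ} (v : Fin (m+1) → Dl N) (t : Dl m) (x : Fin (N+1)) :
    comb v t x = ∑ j, t j * v j x := rfl

theorem comb_continuous {m N : ℕ} (v : Fin (m+1) → Dl N) : Continuous (comb v) := by
  refine Continuous.subtype_mk ?_ _
  refine continuous_pi fun x => continuous_finsetSum _ fun j _ => ?_
  exact ((continuous_apply j).comp continuous_subtype_val).mul continuous_const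

noncomputable def affC {m N : ℕ} (v : Fin (m+1) → Dl N) : C(Dl m, Dl N) :=
  ⟨comb v, comb_continuous v⟩

noncomputable def vtx (N : ℕ) (i : Fin (N+1)) : Dl N := stdSimplex.vertex i

theorem vtx_apply (N : ℕ) (i j : Fin (N+1)) : vtx N i j = if j = i then 1 else 0 := by
  change (Pi.single i (1:ℝ) : Fin (N+1) → ℝ) j = _
  simp [Pi.single_apply]

theorem Dl_ext {N : ℕ} {s t : Dl N} (h : ∀ x, s x = t x) : s = t :=
  Subtype.ext (funext h)

theorem comb_vtx {N : ℕ} (t : Dl N) : comb (vtx N) t = t := by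
  apply Dl_ext
  intro x
  simp [comb_apply, vtx_apply]

theorem comb_of_vtx {m N : ℕ} (v : Fin (m+1) → Dl N) (i : Fin (m+1)) : comb v (vtx m i) = v i := by
  apply Dl_ext
  intro x
  simp [comb_apply, vtx_apply]

theorem comb_comp {k m N : ℕ} (w : Fin (m+1) → Dl N) (v : Fin (k+1) → Dl m) (t : Dl k) :
    comb w (comb v t) = comb (comb w ∘ v) t := by
  apply Dl_ext
  intro x
  simp only [comb_apply, Function.comp, Finset.sum_mul, Finset.mul_sum]
  rw [Finset.sum_comm]
  simp only [mul_assoc]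

noncomputable def bary (N : ℕ) (m : ℕ) (v : Fin (m+1) → Dl N) : Dl N := comb v stdSimplex.barycenter

theorem comb_bary {N N' : ℕ} (w : Fin (N+1) → Dl N') (m : ℕ) (v : Fin (m+1) → Dl N) :
    comb w (bary N m v) = bary N' m (comb w ∘ v) := comb_comp w v _

theorem comb_vtx_comp {m N : ℕ} (v : Fin (m+1) → Dl N) {k : ℕ} (u : Fin (k+1) → Fin (m+1)) :
    comb v ∘ (vtx m ∘ u) = v ∘ u := by
  funext j
  simp [comb_of_vtx]

/-! metric -/

theorem dist_comb_le {m N : ℕ} (v : Fin (m+1) → Dl N) (t : Dl m) (x : Dl N) (ρ : ℝ)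
    (h : ∀ j, dist (v j) x ≤ ρ) : dist (comb v t) x ≤ ρ := by
  have hρ : 0 ≤ ρ := dist_nonneg.trans (h 0)
  rw [Subtype.dist_eq, dist_pi_le_iff hρ]
  intro y
  have h1 : ∀ j, |v j y - x y| ≤ ρ := fun j => by
    have := h j
    rw [Subtype.dist_eq, dist_pi_le_iff hρ] at this
    exact this y
  have h2 : comb v t y - x y = ∑ j, t j * (v j y - x y) := by
    simp only [mul_sub, Finset.sum_sub_distrib, ← Finset.sum_mul, stdSimplex.sum_eq_one, one_mul,
      comb_apply]
  change |comb v t y - x y| ≤ ρ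
  rw [h2]
  calc _ ≤ ∑ j, |t j * (v j y - x y)| := Finset.abs_sum_le_sum_abs _ _
    _ ≤ ∑ j, t j * ρ := Finset.sum_le_sum fun j _ => by
        rw [abs_mul, abs_of_nonneg (stdSimplex.zero_le t j)]
        exact mul_le_mul_of_nonneg_left (h1 j) (stdSimplex.zero_le t j)
    _ = ρ := by rw [← Finset.sum_mul, stdSimplex.sum_eq_one, one_mul]

theorem dist_bary_le {m N : ℕ} (v : Fin (m+1) → Dl N) (i : Fin (m+1)) (ρ : ℝ)
    (h : ∀ i j, dist (v i) (v j) ≤ ρ) : dist (bary N m v) (v i) ≤ (m / (m+1) : ℝ) * ρ := by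
  have hρ : 0 ≤ ρ := dist_nonneg.trans (h 0 0)
  have hpos : (0:ℝ) < m + 1 := by positivity
  rw [Subtype.dist_eq, dist_pi_le_iff (by positivity)]
  intro y
  have h1 : ∀ j, |v j y - v i y| ≤ ρ := fun j => by
    have := h j i
    rw [Subtype.dist_eq, dist_pi_le_iff hρ] at this
    exact this y
  have hb : ∀ j, (stdSimplex.barycenter : Dl m) j = 1 / (m+1 : ℝ) := fun j => by
    refine (stdSimplex.barycenter_apply (𝕜 := ℝ) (X := Fin (m+1)) j).trans ?_
    simp
  have h2 : bary N m v y - v i y = ∑ j, (1 / (m+1 : ℝ)) * (v j y - v i y) := by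
    have hone : ∑ j, (stdSimplex.barycenter : Dl m) j = 1 := stdSimplex.sum_eq_one _
    simp only [hb] at hone
    simp only [mul_sub, Finset.sum_sub_distrib, ← Finset.sum_mul, hone, one_mul, bary,
      comb_apply, hb]
  change |bary N m v y - v i y| ≤ _
  rw [h2, ← Finset.mul_sum, abs_mul, abs_of_pos (by positivity : (0:ℝ) < 1 / (m+1))]
  have h3 : |∑ j, (v j y - v i y)| ≤ m * ρ := by
    calc _ ≤ ∑ j, |v j y - v i y| := Finset.abs_sum_le_sum_abs _ _
      _ = ∑ j ∈ Finset.univ.erase i, |v j y - v i y| := by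
          rw [← Finset.add_sum_erase _ _ (Finset.mem_univ i)]; simp
      _ ≤ ∑ j ∈ Finset.univ.erase i, ρ := Finset.sum_le_sum fun j _ => h1 j
      _ = m * ρ := by simp
  calc 1 / (m+1:ℝ) * |∑ j, (v j y - v i y)| ≤ 1 / (m+1:ℝ) * (m * ρ) := by gcongr
    _ = _ := by ring

/-! supports -/

def SP {K : Type} (m : ℕ) (Q : (Fin m → K) → Prop) : Submodule ℚ ((Fin m → K) →₀ ℚ) :=
  Finsupp.supported ℚ ℚ {v | Q v}

theorem SP_single {K : Type} {m : ℕ} {Q : (Fin m → K) → Prop} {v : Fin m → K} (h : Q v) :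
    Finsupp.single v (1:ℚ) ∈ SP m Q := Finsupp.single_mem_supported _ _ h

theorem SP_mono {K : Type} {m : ℕ} {Q Q' : (Fin m → K) → Prop} (h : ∀ v, Q v → Q' v) :
    SP m Q ≤ SP m Q' := Finsupp.supported_mono (fun v hv => h v hv)

theorem supp_map {A M : Type} [AddCommGroup M] [Module ℚ M] (s : Set A)
    (L : (A →₀ ℚ) →ₗ[ℚ] M) (S : Submodule ℚ M) (h : ∀ a ∈ s, L (Finsupp.single a 1) ∈ S)
    (c : A →₀ ℚ) (hc : c ∈ Finsupp.supported ℚ ℚ s) : L c ∈ S := by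
  rw [Finsupp.supported_eq_span_single] at hc
  induction hc using Submodule.span_induction with
  | mem x hx => obtain ⟨a, ha, rfl⟩ := hx; exact h a ha
  | zero => simp
  | add x y _ _ hx hy => rw [map_add]; exact S.add_mem hx hy
  | smul r x _ hx => rw [map_smul]; exact S.smul_mem r hx

theorem bd_mem {K : Type} {m : ℕ} {S : Submodule ℚ ((Fin m → K) →₀ ℚ)} {v : Fin (m+1) → K}
    (h : ∀ i : Fin (m+1), Finsupp.single (v ∘ i.succAbove) (1:ℚ) ∈ S) :
    bd m (Finsupp.single v 1) ∈ S := by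
  rw [bd_single]
  exact S.sum_mem fun i _ => S.smul_mem _ (h i)

section
variable {K : Type} (b : ∀ m : ℕ, (Fin (m+1) → K) → K) (A : Set K)

theorem cone_hull (x : K) (hx : x ∈ A) (m : ℕ) (c : (Fin m → K) →₀ ℚ)
    (hc : c ∈ SP m (fun v => ∀ j, v j ∈ A)) : cone x m c ∈ SP (m+1) (fun v => ∀ j, v j ∈ A) := by
  refine supp_map _ _ _ (fun v hv => ?_) c hc
  rw [cone_single]
  apply SP_single
  intro j
  refine Fin.cases ?_ (fun j => ?_) j
  · simpa
  · simpa using hv j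

theorem sd_hull (hb : ∀ m v, (∀ j, v j ∈ A) → b m v ∈ A) (m : ℕ) (c : (Fin m → K) →₀ ℚ)
    (hc : c ∈ SP m (fun v => ∀ j, v j ∈ A)) : sd b m c ∈ SP m (fun v => ∀ j, v j ∈ A) := by
  induction m with
  | zero => simpa [sd] using hc
  | succ m ih =>
    refine supp_map _ _ _ (fun v hv => ?_) c hc
    rw [sd_single]
    refine cone_hull A _ (hb m v hv) m _ (ih _ (bd_mem fun i => SP_single fun j => hv _))

theorem TT_hull (hb : ∀ m v, (∀ j, v j ∈ A) → b m v ∈ A) (m : ℕ) (c : (Fin m → K) →₀ ℚ)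
    (hc : c ∈ SP m (fun v => ∀ j, v j ∈ A)) : TT b m c ∈ SP (m+1) (fun v => ∀ j, v j ∈ A) := by
  induction m with
  | zero => simp [TT]
  | succ m ih =>
    refine supp_map _ _ _ (fun v hv => ?_) c hc
    rw [TT_single]
    refine cone_hull A _ (hb m v hv) _ _ (Submodule.sub_mem _ (SP_single hv)
      (ih _ (bd_mem fun i => SP_single fun j => hv _)))
end

theorem hull_bary {m N : ℕ} (v : Fin (m+1) → Dl N) (k : ℕ) (w : Fin (k+1) → Dl N)
    (h : ∀ j, w j ∈ Set.range (comb v)) (t : Dl k) : comb w t ∈ Set.range (comb v) := by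
  choose u hu using h
  refine ⟨comb u t, ?_⟩
  rw [comb_comp]
  congr 1
  funext j
  exact hu j

def Mesh {m N : ℕ} (ρ : ℝ) (v : Fin m → Dl N) : Prop := ∀ i j, dist (v i) (v j) ≤ ρ

theorem cone_mesh {N : ℕ} (m : ℕ) (v : Fin (m+1) → Dl N) (ρ : ℝ) (h : Mesh ρ v)
    (k : ℕ) (c : (Fin k → Dl N) →₀ ℚ)
    (hc : c ∈ SP k (fun w => Mesh ((m/(m+1) : ℝ) * ρ) w ∧ ∀ j, w j ∈ Set.range (comb v))) :
    cone (bary N m v) k c ∈ SP (k+1) (Mesh ((m/(m+1) : ℝ) * ρ)) := by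
  have hρ : 0 ≤ ρ := dist_nonneg.trans (h 0 0)
  refine supp_map _ _ _ (fun w hw => ?_) c hc
  rw [cone_single]
  apply SP_single
  have h1 : ∀ j, dist (w j) (bary N m v) ≤ (m/(m+1) : ℝ) * ρ := by
    intro j
    obtain ⟨t, ht⟩ := hw.2 j
    rw [← ht]
    refine dist_comb_le v t _ _ fun j => ?_
    rw [dist_comm]
    exact dist_bary_le v j ρ h
  have h0 : 0 ≤ (m/(m+1) : ℝ) * ρ := by positivity
  intro i j
  refine Fin.cases ?_ (fun i => ?_) i <;> refine Fin.cases ?_ (fun j => ?_) j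
  · simpa using h0
  · simpa [dist_comm] using h1 j
  · simpa using h1 i
  · simpa using hw.1 i j

theorem mesh_sd_single {N : ℕ} (m : ℕ) (v : Fin (m+1) → Dl N) (ρ : ℝ) (h : Mesh ρ v) :
    sd (bary N) (m+1) (Finsupp.single v 1) ∈ SP (m+1) (Mesh ((m/(m+1) : ℝ) * ρ)) := by
  have hρ : 0 ≤ ρ := dist_nonneg.trans (h 0 0)
  induction m with
  | zero =>
    rw [sd_single]
    apply cone_mesh _ _ _ h
    simp only [sd, LinearMap.id_apply]
    exact bd_mem fun i => SP_single ⟨fun i => i.elim0, fun i => i.elim0⟩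
  | succ m ih =>
    rw [sd_single]
    apply cone_mesh _ _ _ h
    have e1 : ∀ i : Fin (m+2), sd (bary N) (m+1) (Finsupp.single (v ∘ i.succAbove) 1) ∈
        SP (m+1) (fun w => Mesh (((m+1 : ℕ)/((m+1 : ℕ)+1) : ℝ) * ρ) w ∧
          ∀ j, w j ∈ Set.range (comb v)) := by
      intro i
      have a1 : sd (bary N) (m+1) (Finsupp.single (v ∘ i.succAbove) 1) ∈
          SP (m+1) (Mesh ((m/(m+1) : ℝ) * ρ)) := by
        exact ih (v ∘ i.succAbove) (fun a b => h _ _)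
      have a2 : sd (bary N) (m+1) (Finsupp.single (v ∘ i.succAbove) 1) ∈
          SP (m+1) (fun w => ∀ j, w j ∈ Set.range (comb v)) := by
        refine sd_hull (bary N) _ (fun k w hw => hull_bary v k w hw _) _ _ (SP_single fun j => ?_)
        exact ⟨vtx _ (i.succAbove j), comb_of_vtx _ _⟩
      have a3 : ((m/(m+1) : ℝ) * ρ) ≤ ((m+1 : ℕ)/((m+1 : ℕ)+1) : ℝ) * ρ := by
        refine mul_le_mul_of_nonneg_right ?_ hρ
        push_cast
        rw [div_le_div_iff₀ (by positivity) (by positivity)]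
        nlinarith
      rw [SP, Finsupp.mem_supported] at a1 a2 ⊢
      intro w hw
      exact ⟨fun i j => (a1 hw i j).trans a3, a2 hw⟩
    rw [bd_single]
    simp only [map_sum, map_smul]
    exact Submodule.sum_mem _ fun i _ => Submodule.smul_mem _ _ (e1 i)

theorem mesh_sd_pow {N : ℕ} (k : ℕ) :
    (sd (bary N) (N+1) ^ k) (Finsupp.single (vtx N) 1) ∈
      SP (N+1) (Mesh ((N/(N+1) : ℝ)^k)) := by
  induction k with
  | zero =>
    simp only [pow_zero, Module.End.one_apply]
    apply SP_single
    intro i j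
    rw [Subtype.dist_eq, dist_pi_le_iff zero_le_one]
    intro y
    change |vtx N i y - vtx N j y| ≤ 1
    rw [vtx_apply, vtx_apply]
    split_ifs <;> simp
  | succ k ih =>
    rw [pow_succ' (sd (bary N) (N+1)), Module.End.mul_apply]
    refine supp_map _ _ _ (fun v hv => ?_) _ ih
    have := mesh_sd_single N v _ hv
    rwa [← pow_succ'] at this

end GM

namespace GM
open Finsupp

/-! ### Singular cochains -/

section Cochains
variable {E : Type} [TopologicalSpace E]

/-- Singular cochains, all degrees at once. -/
abbrev Co (E : Type) [TopologicalSpace E] : Type := ∀ m : ℕ, C(Dl m, E) → ℚ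

noncomputable def pull {m N : ℕ} (σ : C(Dl N, E)) (v : Fin (m+1) → Dl N) : C(Dl m, E) :=
  σ.comp (affC v)

theorem pull_apply {m N : ℕ} (σ : C(Dl N, E)) (v : Fin (m+1) → Dl N) (t : Dl m) :
    pull σ v t = σ (comb v t) := rfl

theorem pull_vtx {N : ℕ} (σ : C(Dl N, E)) : pull σ (vtx N) = σ := by
  ext t
  rw [pull_apply, comb_vtx]

theorem pull_pull {k m N : ℕ} (σ : C(Dl N, E)) (w : Fin (m+1) → Dl N) (v : Fin (k+1) → Dl m) :
    pull (pull σ w) v = pull σ (comb w ∘ v) := by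
  ext t
  rw [pull_apply, pull_apply, pull_apply, comb_comp]

noncomputable def face {m : ℕ} (i : Fin (m+2)) (σ : C(Dl (m+1), E)) : C(Dl m, E) :=
  pull σ (vtx (m+1) ∘ i.succAbove)

theorem face_pull {m N : ℕ} (i : Fin (m+2)) (σ : C(Dl N, E)) (v : Fin (m+2) → Dl N) :
    face i (pull σ v) = pull σ (v ∘ i.succAbove) := by
  rw [face, pull_pull, comb_vtx_comp]

/-- Coboundary. -/
noncomputable def delta : Co E →ₗ[ℚ] Co E where
  toFun f := fun m => match m with
    | 0 => fun _ => 0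
    | m+1 => fun σ => ∑ i : Fin (m+2), (-1 : ℚ)^(i:ℕ) * f m (face i σ)
  map_add' f g := by
    funext m σ
    cases m with
    | zero => simp
    | succ m => simp [mul_add, Finset.sum_add_distrib]
  map_smul' r f := by
    funext m σ
    cases m with
    | zero => simp
    | succ m =>
      simp only [Pi.smul_apply, smul_eq_mul, RingHom.id_apply, Finset.mul_sum]
      exact Finset.sum_congr rfl fun i _ => by ring

theorem delta_zero (f : Co E) (σ : C(Dl 0, E)) : delta f 0 σ = 0 := rfl

theorem delta_succ (f : Co E) (m : ℕ) (σ : C(Dl (m+1), E)) :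
    delta f (m+1) σ = ∑ i : Fin (m+2), (-1 : ℚ)^(i:ℕ) * f m (face i σ) := rfl

noncomputable def ev (f : Co E) {N : ℕ} (σ : C(Dl N, E)) (m : ℕ) :
    ((Fin (m+1) → Dl N) →₀ ℚ) →ₗ[ℚ] ℚ :=
  Finsupp.linearCombination ℚ (fun v => f m (pull σ v))

theorem ev_single (f : Co E) {N : ℕ} (σ : C(Dl N, E)) (m : ℕ) (v : Fin (m+1) → Dl N) :
    ev f σ m (Finsupp.single v 1) = f m (pull σ v) := by simp [ev]

theorem ev_delta (f : Co E) {N : ℕ} (σ : C(Dl N, E)) (m : ℕ) (c : (Fin (m+2) → Dl N) →₀ ℚ) :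
    ev (delta f) σ (m+1) c = ev f σ m (bd (m+1) c) := by
  have : ev (delta f) σ (m+1) = (ev f σ m).comp (bd (m+1)) := by
    apply lin_ext
    intro v
    rw [LinearMap.comp_apply, ev_single, bd_single, delta_succ, map_sum]
    simp only [map_smul, ev_single, face_pull, smul_eq_mul]
  exact LinearMap.congr_fun this c

theorem ev_mp (f : Co E) {N N' : ℕ} (σ : C(Dl N, E)) (w : Fin (N'+1) → Dl N) (m : ℕ)
    (c : (Fin (m+1) → Dl N') →₀ ℚ) :
    ev f (pull σ w) m c = ev f σ m (mp (comb w) (m+1) c) := by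
  have : ev f (pull σ w) m = (ev f σ m).comp (mp (comb w) (m+1)) := by
    apply lin_ext
    intro v
    rw [LinearMap.comp_apply, ev_single, mp_single, ev_single, pull_pull]
  exact LinearMap.congr_fun this c

theorem delta_delta (f : Co E) : delta (delta f) = 0 := by
  funext m σ
  cases m with
  | zero => rfl
  | succ m =>
    cases m with
    | zero => rw [delta_succ]; simp [delta_zero]
    | succ m =>
      have h := ev_single (delta (delta f)) σ (m+2) (vtx _)
      rw [pull_vtx] at h
      rw [← h, ev_delta, ev_delta, bd_bd]
      simp

/-- cochains with support in `X` -/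
def CX (X : Set E) : Submodule ℚ (Co E) where
  carrier := {f | ∀ m (σ : C(Dl m, E)), (∀ t, σ t ∉ X) → f m σ = 0}
  add_mem' := by
    intro f g hf hg m σ h
    simp [hf m σ h, hg m σ h]
  zero_mem' := by intro m σ h; rfl
  smul_mem' := by
    intro r f hf m σ h
    simp [hf m σ h]

theorem mem_CX {X : Set E} {f : Co E} :
    f ∈ CX X ↔ ∀ m (σ : C(Dl m, E)), (∀ t, σ t ∉ X) → f m σ = 0 := Iff.rfl

theorem CX_mono {X Y : Set E} (h : X ⊆ Y) : CX X ≤ CX Y := fun _ hf m σ hσ =>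
  hf m σ fun t ht => hσ t (h ht)

theorem delta_mem {X : Set E} {f : Co E} (hf : f ∈ CX X) : delta f ∈ CX X := by
  intro m σ hσ
  cases m with
  | zero => rfl
  | succ m =>
    rw [delta_succ]
    refine Finset.sum_eq_zero fun i _ => ?_
    rw [hf m (face i σ) (fun t => hσ _), mul_zero]

open Classical in
theorem CX_union (X Y : Set E) (f : Co E) (hf : f ∈ CX (X ∪ Y)) :
    ∃ g ∈ CX X, ∃ h ∈ CX Y, f = g + h := by
  refine ⟨fun m σ => if ∀ t, σ t ∉ X then 0 else f m σ, ?_,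
    fun m σ => if ∀ t, σ t ∉ X then f m σ else 0, ?_, ?_⟩
  · intro m σ h
    simp [h]
  · intro m σ h
    simp only
    split_ifs with h1
    · exact hf m σ fun t ht => ht.elim (h1 t) (h t)
    · rfl
  · funext m σ
    simp only [Pi.add_apply]
    split_ifs <;> simp

/-! degree projections -/

noncomputable def pr (j : ℕ) : Co E →ₗ[ℚ] Co E where
  toFun f := fun m σ => if m = j then f m σ else 0
  map_add' f g := by funext m σ; simp only [Pi.add_apply]; split_ifs <;> simp
  map_smul' r f := by
    funext m σ
    simp only [Pi.smul_apply, RingHom.id_apply]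
    split_ifs <;> simp

theorem pr_apply (j : ℕ) (f : Co E) (m : ℕ) (σ : C(Dl m, E)) :
    pr j f m σ = if m = j then f m σ else 0 := rfl

theorem pr_mem {X : Set E} {f : Co E} (hf : f ∈ CX X) (j : ℕ) : pr j f ∈ CX X := by
  intro m σ h
  rw [pr_apply, hf m σ h, ite_self]

theorem pr_pr (i j : ℕ) (f : Co E) : pr i (pr j f) = if i = j then pr j f else 0 := by
  funext m σ
  split_ifs with h
  · subst h
    simp only [pr_apply]; split_ifs <;> rfl
  · simp only [pr_apply, Pi.zero_apply]
    split_ifs with h1 h2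
    · exact absurd (h1.symm.trans h2) h
    · rfl
    · rfl

theorem delta_pr (j : ℕ) (f : Co E) : delta (pr j f) = pr (j+1) (delta f) := by
  funext m σ
  cases m with
  | zero => simp [pr_apply, delta_zero]
  | succ m =>
    simp only [pr_apply, delta_succ, Nat.add_right_cancel_iff]
    split_ifs <;> simp

theorem pr_zero_delta (f : Co E) : pr 0 (delta f) = 0 := by
  funext m σ
  simp only [pr_apply, Pi.zero_apply]
  split_ifs with h
  · subst h; rfl
  · rfl

end Cochains

/-! ### The small simplices lemma -/
section Small
variable {E : Type} [TopologicalSpace E] (X Y : Set E)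

def PS {N : ℕ} (σ : C(Dl N, E)) (k : ℕ) : Prop :=
  ∀ x : Dl N, (∀ y, dist y x ≤ (N/(N+1) : ℝ)^k → σ y ∉ X) ∨
    (∀ y, dist y x ≤ (N/(N+1) : ℝ)^k → σ y ∉ Y)

theorem ratio_lt_one (N : ℕ) : (N/(N+1) : ℝ) < 1 := by
  rw [div_lt_one (by positivity)]; linarith

theorem PS_mono {N : ℕ} (σ : C(Dl N, E)) {k l : ℕ} (h : k ≤ l) (hk : PS X Y σ k) :
    PS X Y σ l := by
  intro x
  have : (N/(N+1) : ℝ)^l ≤ (N/(N+1) : ℝ)^k :=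
    pow_le_pow_of_le_one (by positivity) (ratio_lt_one N).le h
  exact (hk x).imp (fun h y hy => h y (hy.trans this)) (fun h y hy => h y (hy.trans this))

theorem PS_exists (hX : IsClosed X) (hY : IsClosed Y) {N : ℕ} (σ : C(Dl N, E))
    (h : ∀ t, σ t ∉ X ∩ Y) : ∃ k, PS X Y σ k := by
  obtain ⟨ε, hε, H⟩ := lebesgue_number_lemma_of_metric (s := (Set.univ : Set (Dl N)))
    (c := fun b : Bool => if b then σ ⁻¹' Xᶜ else σ ⁻¹' Yᶜ) isCompact_univ
    (by
      intro b
      cases b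
      · exact hY.isOpen_compl.preimage σ.continuous
      · exact hX.isOpen_compl.preimage σ.continuous)
    (by
      intro t _
      rw [Set.mem_iUnion]
      by_cases ht : σ t ∈ X
      · exact ⟨false, fun h2 => h t ⟨ht, h2⟩⟩
      · exact ⟨true, ht⟩)
  obtain ⟨k, hk⟩ := exists_pow_lt_of_lt_one hε (ratio_lt_one N)
  refine ⟨k, fun x => ?_⟩
  obtain ⟨b, hb⟩ := H x (Set.mem_univ x)
  cases b
  · exact Or.inr fun y hy => hb (Metric.mem_ball.2 (hy.trans_lt hk))
  · exact Or.inl fun y hy => hb (Metric.mem_ball.2 (hy.trans_lt hk))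

theorem dist_face_le {N : ℕ} (i : Fin (N+2)) (x y : Dl N) :
    dist (comb (vtx (N+1) ∘ i.succAbove) y) (comb (vtx (N+1) ∘ i.succAbove) x) ≤ dist y x := by
  rw [Subtype.dist_eq, dist_pi_le_iff dist_nonneg]
  have key : ∀ (x : Dl N) (j), comb (vtx (N+1) ∘ i.succAbove) x (i.succAbove j) = x j := by
    intro x j
    simp [comb_apply, vtx_apply]
  have key0 : ∀ (x : Dl N), comb (vtx (N+1) ∘ i.succAbove) x i = 0 := by
    intro x
    simp [comb_apply, vtx_apply, (Fin.succAbove_ne i _).symm]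
  intro z
  change |comb (vtx (N+1) ∘ i.succAbove) y z - comb (vtx (N+1) ∘ i.succAbove) x z| ≤ _
  rcases Fin.eq_self_or_eq_succAbove i z with rfl | ⟨j, rfl⟩
  · rw [key0, key0]; simp
  · rw [key, key]
    exact dist_le_pi_dist (y : Fin (N+1) → ℝ) (x : Fin (N+1) → ℝ) j

theorem PS_face {N : ℕ} (σ : C(Dl (N+1), E)) (i : Fin (N+2)) {k : ℕ} (hk : PS X Y σ k) :
    PS X Y (face i σ) k := by
  intro x
  have : (N/(N+1) : ℝ)^k ≤ ((N+1 : ℕ)/((N+1 : ℕ)+1) : ℝ)^k := by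
    refine pow_le_pow_left₀ (by positivity) ?_ k
    push_cast
    rw [div_le_div_iff₀ (by positivity) (by positivity)]
    nlinarith
  exact (hk (comb (vtx (N+1) ∘ i.succAbove) x)).imp
    (fun h y hy => h _ ((dist_face_le i x y).trans (hy.trans this)))
    (fun h y hy => h _ ((dist_face_le i x y).trans (hy.trans this)))

def SmallT {N m : ℕ} (σ : C(Dl N, E)) (v : Fin (m+1) → Dl N) : Prop :=
  (∀ t, σ (comb v t) ∉ X) ∨ (∀ t, σ (comb v t) ∉ Y)

theorem ev_small (u : Co E) (h1 : u ∈ CX X) (h2 : u ∈ CX Y) {N m : ℕ} (σ : C(Dl N, E))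
    (c : (Fin (m+1) → Dl N) →₀ ℚ) (hc : c ∈ SP (m+1) (SmallT X Y σ)) : ev u σ m c = 0 := by
  have := supp_map _ (ev u σ m) ⊥ (fun v hv => ?_) c hc
  · simpa using this
  · rw [ev_single, Submodule.mem_bot]
    exact hv.elim (fun h => h1 _ _ h) (fun h => h2 _ _ h)

theorem sd_small {N : ℕ} (σ : C(Dl N, E)) (k : ℕ) (hk : PS X Y σ k) :
    (sd (bary N) (N+1) ^ k) (Finsupp.single (vtx N) 1) ∈ SP (N+1) (SmallT X Y σ) := by
  refine SP_mono (fun v hv => ?_) (mesh_sd_pow k)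
  exact (hk (v 0)).imp (fun h t => h _ (dist_comb_le v t _ _ fun j => hv j 0))
    (fun h t => h _ (dist_comb_le v t _ _ fun j => hv j 0))

theorem TT_small {N : ℕ} (σ : C(Dl N, E)) (m : ℕ) (c : (Fin (m+1) → Dl N) →₀ ℚ)
    (hc : c ∈ SP (m+1) (SmallT X Y σ)) :
    TT (bary N) (m+1) c ∈ SP (m+2) (SmallT X Y σ) := by
  refine supp_map _ _ _ (fun v hv => ?_) c hc
  have h1 := TT_hull (bary N) (Set.range (comb v)) (fun k w hw => hull_bary v k w hw _) (m+1)
    (Finsupp.single v 1) (SP_single fun j => ⟨vtx _ j, comb_of_vtx _ _⟩)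
  refine SP_mono (fun w hw => ?_) h1
  have h2 : ∀ t, ∃ s, comb v s = comb w t := fun t => hull_bary v _ w hw t
  exact hv.imp (fun h t => by obtain ⟨s, hs⟩ := h2 t; rw [← hs]; exact h s)
    (fun h t => by obtain ⟨s, hs⟩ := h2 t; rw [← hs]; exact h s)

open Classical in
noncomputable def mk {N : ℕ} (σ : C(Dl N, E)) : ℕ :=
  if h : ∃ k, PS X Y σ k then Nat.find h else 0

theorem mk_spec {N : ℕ} (σ : C(Dl N, E)) (h : ∃ k, PS X Y σ k) : PS X Y σ (mk X Y σ) := by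
  classical
  rw [mk, dif_pos h]
  exact Nat.find_spec h

theorem mk_face {N : ℕ} (σ : C(Dl (N+1), E)) (i : Fin (N+2)) (h : ∃ k, PS X Y σ k) :
    mk X Y (face i σ) ≤ mk X Y σ := by
  classical
  have h1 := PS_face X Y σ i (mk_spec X Y σ h)
  have h2 : ∃ k, PS X Y (face i σ) k := ⟨_, h1⟩
  conv_lhs => rw [mk, dif_pos h2]
  exact Nat.find_min' h2 h1

theorem ev_DD (u : Co E) (h1 : u ∈ CX X) (h2 : u ∈ CX Y) {N : ℕ} (σ : C(Dl N, E)) {k l : ℕ}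
    (hk : PS X Y σ k) (hl : k ≤ l) :
    ev u σ (N+1) (DD (bary N) l (N+1) (Finsupp.single (vtx N) 1)) =
      ev u σ (N+1) (DD (bary N) k (N+1) (Finsupp.single (vtx N) 1)) := by
  induction l, hl using Nat.le_induction with
  | base => rfl
  | succ l hl ih =>
    rw [← ih, DD, Finset.sum_range_succ, LinearMap.add_apply, map_add, LinearMap.comp_apply]
    rw [ev_small X Y u h1 h2 σ _ (TT_small X Y σ N _ (sd_small X Y σ l (PS_mono X Y σ hl hk)))]
    simp [DD]

theorem DD_mp {N N' : ℕ} (w : Fin (N+1) → Dl N') (k m : ℕ) (c : (Fin m → Dl N) →₀ ℚ) :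
    mp (comb w) (m+1) (DD (bary N) k m c) = DD (bary N') k m (mp (comb w) m c) := by
  simp only [DD, LinearMap.sum_apply, map_sum, LinearMap.comp_apply]
  refine Finset.sum_congr rfl fun i _ => ?_
  rw [mp_TT (bary N) (bary N') (comb w) (fun m v => comb_bary w m v),
    mp_sd_pow (bary N) (bary N') (comb w) (fun m v => comb_bary w m v)]

open Classical in
theorem small (hX : IsClosed X) (hY : IsClosed Y) (u : Co E) (h1 : u ∈ CX X) (h2 : u ∈ CX Y)
    (h3 : delta u ∈ CX (X ∩ Y)) :
    ∃ w, w ∈ CX X ∧ w ∈ CX Y ∧ u - delta w ∈ CX (X ∩ Y) := by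
  let g : Co E := fun m σ =>
    if ∀ t, σ t ∉ X ∩ Y then
      ev u σ (m+1) (DD (bary m) (mk X Y σ) (m+1) (Finsupp.single (vtx m) 1)) else 0
  have hg0 : ∀ m (σ : C(Dl m, E)), PS X Y σ 0 → g m σ = 0 := by
    intro m σ h0
    simp only [g]
    split_ifs
    · have : mk X Y σ = 0 := by
        rw [mk, dif_pos ⟨0, h0⟩]
        simp [h0]
      rw [this]; simp [DD]
    · rfl
  refine ⟨g, ?_, ?_, ?_⟩
  · intro m σ h
    exact hg0 m σ fun x => Or.inl fun y _ => h y
  · intro m σ h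
    exact hg0 m σ fun x => Or.inr fun y _ => h y
  · intro N σ hσ
    have hex := PS_exists X Y hX hY σ hσ
    have hk := mk_spec X Y σ hex
    set k := mk X Y σ with hkdef
    have e1 : u N σ = ev u σ N (Finsupp.single (vtx N) 1) := by rw [ev_single, pull_vtx]
    have e2 := congrArg (ev u σ N) (bd_DD (bary N) k N (Finsupp.single (vtx N) 1))
    rw [map_sub, ev_small X Y u h1 h2 σ _ (sd_small X Y σ k hk), sub_zero, ← e1, map_add,
      ← ev_delta] at e2
    have e3 : ev (delta u) σ (N+1) (DD (bary N) k (N+1) (Finsupp.single (vtx N) 1)) = 0 := by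
      have := supp_map Set.univ (ev (delta u) σ (N+1)) ⊥ (fun v _ => ?_)
        (DD (bary N) k (N+1) (Finsupp.single (vtx N) 1)) (by simp)
      · simpa using this
      · rw [ev_single, Submodule.mem_bot]
        exact h3 _ _ fun t => hσ _
    rw [e3, zero_add] at e2
    change u N σ - delta g N σ = 0
    rw [← e2, sub_eq_zero]
    cases N with
    | zero => rw [delta_zero]; simp [DD, TT]
    | succ N =>
      rw [delta_succ, bd_single]
      simp only [map_sum, map_smul, smul_eq_mul]
      refine Finset.sum_congr rfl fun i _ => ?_
      congr 1
      have hface : ∀ t, face i σ t ∉ X ∩ Y := fun t => hσ _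
      simp only [g]
      rw [if_pos hface]
      have hex' : ∃ k, PS X Y (face i σ) k := ⟨k, PS_face X Y σ i hk⟩
      rw [← ev_DD X Y u h1 h2 (face i σ) (mk_spec X Y _ hex') (mk_face X Y σ i hex)]
      rw [← hkdef]
      conv_rhs => rw [face, ev_mp, DD_mp, mp_single, comb_vtx_comp_self]
where
  comb_vtx_comp_self {N N' : ℕ} (w : Fin (N+1) → Dl N') : comb w ∘ vtx N = w := by
    funext j
    simp [comb_of_vtx]

end Small
end GM

namespace GM
open Finsupp

/-! ### The cone operator -/

section Cone
variable {E : Type} [NormedAddCommGroup E] [NormedSpace ℝ E]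

open Classical in
noncomputable def tailN {m : ℕ} (t : Dl (m+1)) : Dl m :=
  if h : t 0 = 1 then vtx m 0 else
  ⟨fun j => t j.succ / (1 - t 0), fun j => div_nonneg (stdSimplex.zero_le t _)
    (sub_nonneg.2 (stdSimplex.le_one t 0)), by
    rw [← Finset.sum_div]
    have h1 := stdSimplex.sum_eq_one t
    rw [Fin.sum_univ_succ] at h1
    rw [div_eq_one_iff_eq (sub_ne_zero.2 (Ne.symm h))]
    linarith⟩

theorem tailN_apply {m : ℕ} (t : Dl (m+1)) (h : t 0 ≠ 1) (j : Fin (m+1)) :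
    tailN t j = t j.succ / (1 - t 0) := by
  rw [tailN, dif_neg h]; rfl

theorem Dl_coord_cont {m : ℕ} (j : Fin (m+1)) : Continuous (fun t : Dl m => t j) :=
  (continuous_apply j).comp continuous_subtype_val

theorem tailN_cont {m : ℕ} (t : Dl (m+1)) (h : t 0 ≠ 1) : ContinuousAt (tailN (m := m)) t := by
  rw [Topology.IsInducing.subtypeVal.continuousAt_iff, continuousAt_pi]
  intro j
  have h1 : ContinuousAt (fun t : Dl (m+1) => t j.succ / (1 - t 0)) t :=
    (Dl_coord_cont _).continuousAt.div (continuousAt_const.sub (Dl_coord_cont 0).continuousAt)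
      (sub_ne_zero.2 (Ne.symm h))
  refine h1.congr ?_
  have h2 : ∀ᶠ s : Dl (m+1) in nhds t, s 0 ≠ 1 :=
    (Dl_coord_cont 0).continuousAt.eventually_ne h
  filter_upwards [h2] with s hs
  exact (tailN_apply s hs j).symm

noncomputable def kfun (x0 : E) {m : ℕ} (σ : C(Dl m, E)) (t : Dl (m+1)) : E :=
  (t 0) • x0 + (1 - t 0) • σ (tailN t)

theorem kfun_cont (x0 : E) {m : ℕ} (σ : C(Dl m, E)) : Continuous (kfun x0 σ) := by
  unfold kfun
  refine ((Dl_coord_cont 0).smul continuous_const).add ?_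
  rw [continuous_iff_continuousAt]
  intro t
  by_cases h : t 0 = 1
  · obtain ⟨C, hC⟩ := (isCompact_range σ.continuous).isBounded.exists_norm_le
    have hC' : ∀ s, ‖σ s‖ ≤ C := fun s => hC _ ⟨s, rfl⟩
    have : Filter.Tendsto (fun s : Dl (m+1) => (1 - s 0) • σ (tailN s)) (nhds t) (nhds 0) := by
      apply squeeze_zero_norm (a := fun s : Dl (m+1) => |1 - s 0| * C)
      · intro s
        rw [norm_smul, Real.norm_eq_abs]
        exact mul_le_mul_of_nonneg_left (hC' _) (abs_nonneg _)
      · have h3 : Continuous (fun s : Dl (m+1) => |1 - s 0| * C) :=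
          ((continuous_const.sub (Dl_coord_cont 0)).abs).mul continuous_const
        have := h3.tendsto t
        simpa [h] using this
    rw [ContinuousAt]
    convert this using 2
    simp [h]
  · exact (continuousAt_const.sub (Dl_coord_cont 0).continuousAt).smul
      (σ.continuous.continuousAt.comp (tailN_cont t h))

noncomputable def kk (x0 : E) {m : ℕ} (σ : C(Dl m, E)) : C(Dl (m+1), E) := ⟨kfun x0 σ, kfun_cont x0 σ⟩

theorem kk_apply (x0 : E) {m : ℕ} (σ : C(Dl m, E)) (t : Dl (m+1)) :
    kk x0 σ t = (t 0) • x0 + (1 - t 0) • σ (tailN t) := rfl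

theorem face_kk_zero (x0 : E) {m : ℕ} (σ : C(Dl m, E)) : face 0 (kk x0 σ) = σ := by
  ext1 t
  rw [face, pull_apply, kk_apply]
  have h0 : comb (vtx (m+1) ∘ (0 : Fin (m+2)).succAbove) t 0 = 0 := by
    simp [comb_apply, vtx_apply, Fin.succ_ne_zero, eq_comm]
  have h1 : tailN (comb (vtx (m+1) ∘ (0 : Fin (m+2)).succAbove) t) = t := by
    apply Dl_ext
    intro j
    rw [tailN_apply _ (by rw [h0]; norm_num), h0]
    simp [comb_apply, vtx_apply]
  rw [h0, h1]
  simp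

theorem face_kk_succ (x0 : E) {m : ℕ} (σ : C(Dl (m+1), E)) (i : Fin (m+2)) :
    face i.succ (kk x0 σ) = kk x0 (face i σ) := by
  ext1 t
  rw [face, pull_apply, kk_apply, kk_apply]
  have h0 : comb (vtx (m+2) ∘ i.succ.succAbove) t 0 = t 0 := by
    rw [comb_apply, Fin.sum_univ_succ]
    simp [vtx_apply, Fin.succ_ne_zero, eq_comm]
  rw [h0]
  by_cases h : t 0 = 1
  · simp [h]
  have h1 : tailN (comb (vtx (m+2) ∘ i.succ.succAbove) t) =
      comb (vtx (m+1) ∘ i.succAbove) (tailN t) := by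
    apply Dl_ext
    intro j
    rw [tailN_apply _ (by rwa [h0]), h0, comb_apply, comb_apply, Fin.sum_univ_succ]
    simp only [tailN_apply t h, Function.comp, Fin.succ_succAbove_zero, Fin.succ_succAbove_succ,
      vtx_apply, Fin.succ_ne_zero, if_false, mul_zero, zero_add, Fin.succ_inj, div_mul_eq_mul_div,
      ← Finset.sum_div]
  rw [h1]
  rfl

theorem face_kk_one (x0 : E) (σ : C(Dl 0, E)) : face 1 (kk x0 σ) = ContinuousMap.const _ x0 := by
  ext1 t
  rw [face, pull_apply, kk_apply]
  have h0 : comb (vtx 1 ∘ (1 : Fin 2).succAbove) t 0 = 1 := by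
    have hh : ∀ x : Fin 1, (0 : Fin 2) = Fin.succAbove 1 x := by decide
    simp [comb_apply, vtx_apply, ← hh]
  rw [h0]
  simp

noncomputable def Kst (x0 : E) : Co E →ₗ[ℚ] Co E where
  toFun f := fun m σ => f (m+1) (kk x0 σ)
  map_add' f g := rfl
  map_smul' r f := rfl

theorem Kst_apply (x0 : E) (f : Co E) (m : ℕ) (σ : C(Dl m, E)) :
    Kst x0 f m σ = f (m+1) (kk x0 σ) := rfl

end Cone

/-- the cochain `1` in degree zero -/
noncomputable def one0 {E : Type} [TopologicalSpace E] : Co E := fun m _ => if m = 0 then 1 else 0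

theorem delta_one0 {E : Type} [TopologicalSpace E] : delta (one0 : Co E) = 0 := by
  funext m σ
  cases m with
  | zero => rfl
  | succ m =>
    rw [delta_succ]
    cases m with
    | zero => simp [one0]
    | succ m => simp [one0]

section Cone2
variable {E : Type} [NormedAddCommGroup E] [NormedSpace ℝ E]

theorem cone_htpy (x0 : E) (f : Co E) :
    f = delta (Kst x0 f) + Kst x0 (delta f) + (f 0 (ContinuousMap.const _ x0)) • one0 := by
  funext m σ
  simp only [Pi.add_apply, Pi.smul_apply, smul_eq_mul]
  rw [Kst_apply, delta_succ, Fin.sum_univ_succ, face_kk_zero]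
  cases m with
  | zero =>
    simp [delta_zero, one0, face_kk_one]
  | succ m =>
    rw [delta_succ]
    simp only [face_kk_succ, Kst_apply, Fin.val_succ, pow_succ, one0]
    simp

theorem Kst_mem (x0 : E) (X : Set E) (hX : ∀ y, y ∉ X → ∀ t : ℝ, 0 ≤ t → t ≤ 1 →
    t • x0 + (1 - t) • y ∉ X) {f : Co E} (hf : f ∈ CX X) : Kst x0 f ∈ CX X := by
  intro m σ hσ
  rw [Kst_apply]
  refine hf _ _ fun t => ?_
  rw [kk_apply]
  exact hX _ (hσ _) _ (stdSimplex.zero_le t 0) (stdSimplex.le_one t 0)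

theorem star_acyclic (x0 : E) (X : Set E) (hx0 : x0 ∉ X)
    (hX : ∀ y, y ∉ X → ∀ t : ℝ, 0 ≤ t → t ≤ 1 → t • x0 + (1 - t) • y ∉ X)
    (f : Co E) (hf : f ∈ CX X) (hd : delta f = 0) : ∃ g ∈ CX X, delta g = f := by
  refine ⟨Kst x0 f, Kst_mem x0 X hX hf, ?_⟩
  have := cone_htpy x0 f
  rw [hd, map_zero, hf 0 (ContinuousMap.const _ x0) (fun _ => hx0)] at this
  simpa using this.symm

/-- `a` generates the local cohomology along `X`, in degree `h`. -/
structure IsGen (X : Set E) (h : ℕ) (a : Co E) : Prop where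
  mem : a ∈ CX X
  cocycle : delta a = 0
  homog : pr h a = a
  gen : ∀ f ∈ CX X, delta f = 0 → ∃ t : ℚ, ∃ g ∈ CX X, f = t • a + delta g
  inj : ∀ t : ℚ, ∀ g ∈ CX X, t • a = delta g → t = 0

theorem isGen_univ : IsGen (Set.univ : Set E) 0 one0 where
  mem := by intro m σ h; exact absurd trivial (h (vtx m 0))
  cocycle := delta_one0
  homog := by
    funext m σ
    rw [pr_apply]
    split_ifs with h
    · rfl
    · simp [one0, h]
  gen f hf hd := by
    refine ⟨f 0 (ContinuousMap.const _ 0), Kst 0 f, ?_, ?_⟩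
    · intro m σ h; exact absurd trivial (h (vtx m 0))
    · have := cone_htpy 0 f
      rw [hd, map_zero, add_zero, add_comm] at this
      exact this
  inj t g hg h := by
    have := congrFun (congrFun h 0) (ContinuousMap.const _ 0)
    rw [delta_zero] at this
    simpa [one0] using this

theorem isGen_step (X Y : Set E) (hX : IsClosed X) (hY : IsClosed Y) (h : ℕ) (a : Co E)
    (hXa : ∀ f ∈ CX X, delta f = 0 → ∃ g ∈ CX X, delta g = f)
    (hYa : ∀ f ∈ CX Y, delta f = 0 → ∃ g ∈ CX Y, delta g = f)
    (ha : IsGen (X ∪ Y) h a) : ∃ b, IsGen (X ∩ Y) (h+1) b := by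
  have iX := CX_mono (E := E) (Set.inter_subset_left (s := X) (t := Y))
  have iY := CX_mono (E := E) (Set.inter_subset_right (s := X) (t := Y))
  have uX := CX_mono (E := E) (Set.subset_union_left (s := X) (t := Y))
  have uY := CX_mono (E := E) (Set.subset_union_right (s := X) (t := Y))
  obtain ⟨x0, hx0, y0, hy0, e0⟩ := CX_union X Y a ha.mem
  have e0' : pr h x0 + pr h y0 = a := by rw [← map_add, ← e0, ha.homog]
  have hs : delta x0 = - delta y0 := by
    rw [eq_neg_iff_add_eq_zero, ← map_add, ← e0, ha.cocycle]
  obtain ⟨w, wX, wY, hw⟩ := small X Y hX hY (delta x0) (delta_mem hx0)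
    (by rw [hs]; exact neg_mem (delta_mem hy0)) (by rw [delta_delta]; exact zero_mem _)
  -- homogeneous choice
  obtain ⟨x, y, mx, my, exy, px, hb⟩ : ∃ x y, x ∈ CX X ∧ y ∈ CX Y ∧ a = x + y ∧ pr h x = x ∧
      delta x ∈ CX (X ∩ Y) := by
    refine ⟨pr h (x0 - w), pr h (y0 + w), pr_mem (sub_mem hx0 wX) h, pr_mem (add_mem hy0 wY) h,
      ?_, ?_, ?_⟩
    · rw [← map_add]
      have : x0 - w + (y0 + w) = a := by rw [e0]; abel
      rw [this, ha.homog]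
    · rw [pr_pr, if_pos rfl]
    · rw [delta_pr, map_sub]
      exact pr_mem hw _
  have exy' : delta x = - delta y := by
    rw [eq_neg_iff_add_eq_zero, ← map_add, ← exy, ha.cocycle]
  refine ⟨delta x, hb, delta_delta x, ?_, ?_, ?_⟩
  · rw [← delta_pr, px]
  · intro f hf hd
    obtain ⟨g1, hg1, e1⟩ := hXa f (iX hf) hd
    obtain ⟨g2, hg2, e2⟩ := hYa f (iY hf) hd
    obtain ⟨t, k, hk, e3⟩ := ha.gen (g1 - g2) (sub_mem (uX hg1) (uY hg2))
      (by rw [map_sub, e1, e2, sub_self])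
    obtain ⟨k1, hk1, k2, hk2, e4⟩ := CX_union X Y k hk
    -- g1 - t x - delta k1 = g2 + t y + delta k2
    have e5 : g1 - t • x - delta k1 = g2 + t • y + delta k2 := by
      have : g1 = g2 + t • a + delta k := by rw [add_assoc, ← e3]; abel
      rw [this, exy, e4, map_add, smul_add]
      abel
    have m1 : g1 - t • x - delta k1 ∈ CX X :=
      sub_mem (sub_mem hg1 (Submodule.smul_mem _ _ mx)) (delta_mem hk1)
    have m2 : g1 - t • x - delta k1 ∈ CX Y := by
      rw [e5]
      exact add_mem (add_mem hg2 (Submodule.smul_mem _ _ my)) (delta_mem hk2)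
    have d1 : delta (g1 - t • x - delta k1) = f - t • delta x := by
      rw [map_sub, map_sub, delta_delta, e1, map_smul, sub_zero]
    obtain ⟨w, wX, wY, hw⟩ := small X Y hX hY _ m1 m2 (by
      rw [d1]; exact sub_mem hf (Submodule.smul_mem _ _ hb))
    refine ⟨t, _, hw, ?_⟩
    rw [map_sub, delta_delta, d1]
    abel
  · intro t g hg e
    -- t x - g is a cocycle in X
    obtain ⟨k1, hk1, f1⟩ := hXa (t • x - g) (sub_mem (Submodule.smul_mem _ _ mx) (iX hg))
      (by rw [map_sub, map_smul, e, sub_self])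
    obtain ⟨k2, hk2, f2⟩ := hYa (t • y + g) (add_mem (Submodule.smul_mem _ _ my) (iY hg))
      (by rw [map_add, map_smul, ← e, exy']; simp)
    refine ha.inj t (k1 + k2) (add_mem (uX hk1) (uY hk2)) ?_
    rw [map_add, f1, f2, exy, smul_add]
    abel

theorem half_star (s0 v : E) (D : Submodule ℝ E) (hv : v ∈ D) (φ : E →ₗ[ℝ] ℝ) (hφ : φ v = 1) :
    s0 - v ∉ {x : E | x - s0 ∈ D ∧ 0 ≤ φ (x - s0)} ∧
    ∀ y, y ∉ {x : E | x - s0 ∈ D ∧ 0 ≤ φ (x - s0)} → ∀ t : ℝ, 0 ≤ t → t ≤ 1 →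
    t • (s0 - v) + (1 - t) • y ∉ {x : E | x - s0 ∈ D ∧ 0 ≤ φ (x - s0)} := by
  have key : s0 - v ∉ {x : E | x - s0 ∈ D ∧ 0 ≤ φ (x - s0)} := by
    rintro ⟨-, h⟩
    have : s0 - v - s0 = - v := by abel
    rw [this, map_neg, hφ] at h
    linarith
  refine ⟨key, ?_⟩
  intro y hy t h0 h1 hz
  rcases h1.eq_or_lt with rfl | h1
  · apply key
    simpa using hz
  have e : t • (s0 - v) + (1 - t) • y - s0 = (1 - t) • (y - s0) - t • v := by module
  obtain ⟨hz1, hz2⟩ := hz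
  rw [e] at hz1 hz2
  apply hy
  have h1' : 0 < 1 - t := sub_pos.2 h1
  constructor
  · have : (1 - t) • (y - s0) ∈ D := by
      have := add_mem hz1 (Submodule.smul_mem _ t hv)
      simpa using this
    exact (Submodule.smul_mem_iff _ h1'.ne').1 this
  · simp only [map_sub φ ((1-t) • (y - s0)), map_smul, hφ, smul_eq_mul, mul_one] at hz2
    have : 0 ≤ (1 - t) * φ (y - s0) := by linarith
    exact (mul_nonneg_iff_of_pos_left h1').1 this

theorem isGen_sub [FiniteDimensional ℝ E] (s0 : E) :
    ∀ (k : ℕ) (D : Submodule ℝ E), Module.finrank ℝ D + k = Module.finrank ℝ E →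
      ∃ a, IsGen {x | x - s0 ∈ D} k a := by
  intro k
  induction k with
  | zero =>
    intro D hD
    have : D = ⊤ := Submodule.eq_top_of_finrank_eq (by simpa using hD)
    subst this
    refine ⟨one0, ?_⟩
    have h : {x : E | x - s0 ∈ (⊤ : Submodule ℝ E)} = Set.univ := by ext; simp
    rw [h]
    exact isGen_univ
  | succ k ih =>
    intro D hD
    have hDt : D < ⊤ := by
      rw [lt_top_iff_ne_top]
      rintro rfl
      rw [finrank_top] at hD
      omega
    obtain ⟨v, -, hv⟩ := SetLike.exists_of_lt hDt
    obtain ⟨φ, hphv, hphD⟩ := Submodule.exists_le_ker_of_notMem hv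
    obtain ⟨φ, hφv, hφD⟩ : ∃ φ : E →ₗ[ℝ] ℝ, φ v = 1 ∧ ∀ x ∈ D, φ x = 0 := by
      refine ⟨(φ v)⁻¹ • φ, by simp [inv_mul_cancel₀ hphv], fun x hx => ?_⟩
      have : φ x = 0 := hphD hx
      simp [this]
    have hv0 : v ≠ 0 := by rintro rfl; exact hv (zero_mem _)
    set D' := D ⊔ Submodule.span ℝ {v} with hD'
    have hvD' : v ∈ D' := Submodule.mem_sup_right (Submodule.mem_span_singleton_self v)
    have hfin : Module.finrank ℝ D' = Module.finrank ℝ D + 1 := by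
      have h1 := Submodule.finrank_sup_add_finrank_inf_eq D (Submodule.span ℝ {v})
      have h2 : D ⊓ Submodule.span ℝ {v} = ⊥ := by
        rw [eq_bot_iff]
        rintro x ⟨hx1, hx2⟩
        obtain ⟨c, rfl⟩ := Submodule.mem_span_singleton.1 hx2
        have := hφD _ hx1
        rw [map_smul, hφv] at this
        have hc : c = 0 := by simpa using this
        simp [hc]
      rw [h2, finrank_bot, finrank_span_singleton hv0] at h1
      exact h1
    obtain ⟨a, ha⟩ := ih D' (by omega)
    set X := {x : E | x - s0 ∈ D' ∧ 0 ≤ φ (x - s0)} with hX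
    set Y := {x : E | x - s0 ∈ D' ∧ 0 ≤ (-φ) (x - s0)} with hY
    have hu : {x | x - s0 ∈ D'} = X ∪ Y := by
      ext x
      simp only [hX, hY, Set.mem_setOf_eq, Set.mem_union, ← and_or_left, LinearMap.neg_apply]
      refine ⟨fun h => ⟨h, ?_⟩, fun h => h.1⟩
      rcases le_total 0 (φ (x - s0)) with h | h
      · exact Or.inl h
      · exact Or.inr (by linarith)
    have hi : {x | x - s0 ∈ D} = X ∩ Y := by
      ext x
      simp only [hX, hY, Set.mem_setOf_eq, Set.mem_inter_iff, LinearMap.neg_apply]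
      constructor
      · intro h
        have h1 := hφD _ h
        have h2 : x - s0 ∈ D' := Submodule.mem_sup_left h
        exact ⟨⟨h2, h1.ge⟩, h2, by rw [h1, neg_zero]⟩
      · rintro ⟨⟨h1, h2⟩, -, h3⟩
        obtain ⟨d, hd, w, hw, e⟩ := Submodule.mem_sup.1 h1
        obtain ⟨c, rfl⟩ := Submodule.mem_span_singleton.1 hw
        have h4 : φ (x - s0) = 0 := by linarith
        rw [← e, map_add, hφD d hd, map_smul, hφv] at h4
        have hc : c = 0 := by simpa using h4
        rw [← e, hc]
        simpa using hd
    rw [hi]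
    rw [hu] at ha
    have cl : ∀ ψ : E →ₗ[ℝ] ℝ, IsClosed {x : E | x - s0 ∈ D' ∧ 0 ≤ ψ (x - s0)} := fun ψ =>
      ((Submodule.closed_of_finiteDimensional D').preimage
        (continuous_id.sub continuous_const)).inter
      (isClosed_le continuous_const (ψ.continuous_of_finiteDimensional.comp
        (continuous_id.sub continuous_const)))
    obtain ⟨sX1, sX2⟩ := half_star s0 v D' hvD' φ hφv
    obtain ⟨sY1, sY2⟩ := half_star s0 (-v) D' (neg_mem hvD') (-φ) (by simp [hφv])
    exact isGen_step X Y (cl φ) (cl (-φ)) k a (star_acyclic _ X sX1 sX2) (star_acyclic _ Y sY1 sY2) ha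

end Cone2
end GM

namespace GM
open Finsupp

/-! ### Chains in a poset -/

section Chains
variable {P : Type} [PartialOrder P]

/-- delete a vertex other than the first one -/
def dl {k : ℕ} (i : Fin (k+1)) (c : pchains P (k+2)) : pchains P (k+1) :=
  ⟨c.1 ∘ i.succ.succAbove, c.2.comp (Fin.strictMono_succAbove _)⟩

theorem dl_zero {k : ℕ} (i : Fin (k+1)) (c : pchains P (k+2)) : (dl i c).1 0 = c.1 0 := by
  simp [dl]

theorem dl_last_le {k : ℕ} (i : Fin (k+1)) (c : pchains P (k+2)) :
    (dl i c).1 (Fin.last k) ≤ c.1 (Fin.last (k+1)) := c.2.monotone (Fin.le_last _)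

theorem comp_dl {k : ℕ} (i : Fin (k+2)) (j : Fin (k+1)) :
    (i.succ.succAbove ∘ j.succ.succAbove : Fin (k+1) → Fin (k+3)) =
      Fin.cons 0 (Fin.succ ∘ (i.succAbove ∘ j.succAbove)) := by
  funext x
  refine Fin.cases ?_ (fun x => ?_) x
  · simp
  · simp

open Classical in
theorem dbl {M : Type} [AddCommGroup M] [Module ℚ M] {k : ℕ} (F : pchains P (k+1) → M)
    (c : pchains P (k+3)) :
    ∑ i : Fin (k+2), ((-1 : ℚ)^(i:ℕ)) • ∑ j : Fin (k+1), ((-1 : ℚ)^(j:ℕ)) •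
      F (dl j (dl i c)) = 0 := by
  rw [← double_sum k (fun f => if h : StrictMono (c.1 ∘ (Fin.cons 0 (Fin.succ ∘ f) : Fin (k+1) → Fin (k+3)))
    then F ⟨_, h⟩ else 0)]
  refine Finset.sum_congr rfl fun i _ => ?_
  congr 1
  refine Finset.sum_congr rfl fun j _ => ?_
  congr 1
  have e : (dl j (dl i c)).1 = c.1 ∘ (Fin.cons 0 (Fin.succ ∘ (i.succAbove ∘ j.succAbove)) : Fin (k+1) → Fin (k+3)) := by
    rw [← comp_dl]; rfl
  rw [dif_pos (by rw [← e]; exact (dl j (dl i c)).2)]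
  congr 1
  exact Subtype.ext e

variable (P) in
abbrev BB : Type := Σ k : ℕ, pchains P (k+1)

def top (b : BB P) : P := b.2.1 (Fin.last b.1)

variable (P) in
abbrev GG : Type := BB P →₀ ℚ

noncomputable def dB : BB P → GG P
  | ⟨0, _⟩ => 0
  | ⟨k+1, c⟩ => ∑ i : Fin (k+1), ((-1 : ℚ)^(i:ℕ)) • Finsupp.single (⟨k, dl i c⟩ : BB P) (1:ℚ)

noncomputable def dG : GG P →ₗ[ℚ] GG P := Finsupp.linearCombination ℚ dB

theorem dG_zero (c : pchains P 1) : dG (Finsupp.single (⟨0, c⟩ : BB P) 1) = 0 := by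
  simp [dG, dB]

theorem dG_succ (k : ℕ) (c : pchains P (k+2)) : dG (Finsupp.single (⟨k+1, c⟩ : BB P) 1) =
    ∑ i : Fin (k+1), ((-1 : ℚ)^(i:ℕ)) • Finsupp.single (⟨k, dl i c⟩ : BB P) (1:ℚ) := by
  simp [dG, dB]

theorem dG_dG (g : GG P) : dG (dG g) = 0 := by
  have : (dG.comp dG : GG P →ₗ[ℚ] GG P) = 0 := by
    apply lin_ext
    rintro ⟨k, c⟩
    rw [LinearMap.comp_apply]
    cases k with
    | zero => rw [dG_zero]; simp
    | succ k =>
      rw [dG_succ, map_sum]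
      cases k with
      | zero => simp [dG_zero]
      | succ k =>
        simp only [map_smul, dG_succ]
        exact dbl (fun c => Finsupp.single (⟨k, c⟩ : BB P) (1:ℚ)) c
  exact LinearMap.congr_fun this g

noncomputable def GI (I : Set P) : Submodule ℚ (GG P) := Finsupp.supported ℚ ℚ {b | top b ∈ I}

theorem GI_single {I : Set P} {b : BB P} (h : top b ∈ I) (r : ℚ) : Finsupp.single b r ∈ GI I :=
  Finsupp.single_mem_supported ℚ r h

theorem GI_mono {I J : Set P} (h : I ⊆ J) : GI I ≤ GI J :=
  Finsupp.supported_mono (fun _ hb => h hb)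

theorem GI_inter {I J : Set P} {g : GG P} (h1 : g ∈ GI I) (h2 : g ∈ GI J) : g ∈ GI (I ∩ J) := by
  rw [GI, Finsupp.mem_supported] at *
  exact fun b hb => ⟨h1 hb, h2 hb⟩

theorem GI_union {I J : Set P} {g : GG P} (h : g ∈ GI (I ∪ J)) : ∃ g1 ∈ GI I, ∃ g2 ∈ GI J,
    g = g1 + g2 := by
  have : {b : BB P | top b ∈ I ∪ J} = {b | top b ∈ I} ∪ {b | top b ∈ J} := rfl
  rw [GI, this, Finsupp.supported_union] at h
  obtain ⟨a, ha, b, hb, e⟩ := Submodule.mem_sup.1 h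
  exact ⟨a, ha, b, hb, e.symm⟩

theorem dG_mem {I : Set P} (hI : IsLowerSet I) {g : GG P} (h : g ∈ GI I) : dG g ∈ GI I := by
  refine supp_map _ dG (GI I) ?_ g h
  rintro ⟨k, c⟩ hb
  cases k with
  | zero => rw [dG_zero]; exact zero_mem _
  | succ k =>
    rw [dG_succ]
    refine sum_mem fun i _ => Submodule.smul_mem _ _ (GI_single ?_ _)
    exact hI (dl_last_le i c) hb

/-! the homotopy appending `q` -/

theorem snoc_mono {k : ℕ} (c : pchains P (k+1)) (q : P) (h : c.1 (Fin.last k) < q) :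
    StrictMono (Fin.snoc c.1 q : Fin (k+2) → P) := by
  rw [Fin.strictMono_iff_lt_succ]
  intro i
  refine Fin.lastCases ?_ (fun i => ?_) i
  · rw [Fin.snoc_castSucc, Fin.succ_last, Fin.snoc_last]; exact h
  · rw [Fin.snoc_castSucc, Fin.succ_castSucc, Fin.snoc_castSucc]
    exact c.2 Fin.castSucc_lt_succ

def app {k : ℕ} (c : pchains P (k+1)) (q : P) (h : c.1 (Fin.last k) < q) : pchains P (k+2) :=
  ⟨Fin.snoc c.1 q, snoc_mono c q h⟩

open Classical in
noncomputable def sB (q : P) (b : BB P) : GG P :=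
  if h : top b < q then ((-1 : ℚ)^b.1) • Finsupp.single (⟨b.1+1, app b.2 q h⟩ : BB P) (1:ℚ) else 0

noncomputable def sG (q : P) : GG P →ₗ[ℚ] GG P := Finsupp.linearCombination ℚ (sB q)

theorem sG_single (q : P) (b : BB P) : sG q (Finsupp.single b 1) = sB q b := by simp [sG]

def pt (q : P) : BB P := ⟨0, ⟨fun _ => q, fun i j h => by omega⟩⟩

theorem sB_lt (q : P) (k : ℕ) (c : pchains P (k+1)) (h : c.1 (Fin.last k) < q) :
    sB q ⟨k, c⟩ = ((-1 : ℚ)^k) • Finsupp.single (⟨k+1, app c q h⟩ : BB P) (1:ℚ) := dif_pos h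

theorem succAbove_last' {k : ℕ} (i : Fin (k+1)) :
    i.castSucc.succAbove (Fin.last k) = Fin.last (k+1) := by
  rw [Fin.succAbove_of_le_castSucc _ _ (Fin.castSucc_le_castSucc_iff.2 (Fin.le_last _)), Fin.succ_last]

theorem dl_app_last {k : ℕ} (c : pchains P (k+1)) (q : P) (h : c.1 (Fin.last k) < q) :
    dl (Fin.last k) (app c q h) = c := by
  apply Subtype.ext
  funext x
  simp only [dl, app, Function.comp, Fin.succ_last, Fin.succAbove_last, Fin.snoc_castSucc]

theorem dl_app {k : ℕ} (c : pchains P (k+2)) (q : P) (h : c.1 (Fin.last (k+1)) < q) (i : Fin (k+1)) :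
    dl i.castSucc (app c q h) = app (dl i c) q ((dl_last_le i c).trans_lt h) := by
  apply Subtype.ext
  funext x
  simp only [dl, app, Function.comp]
  refine Fin.lastCases ?_ (fun x => ?_) x
  · rw [Fin.snoc_last, Fin.succ_castSucc, succAbove_last', Fin.snoc_last]
  · rw [Fin.snoc_castSucc, Fin.succ_castSucc, Fin.castSucc_succAbove_castSucc, Fin.snoc_castSucc]
    rfl

theorem top_dl_castSucc {k : ℕ} (c : pchains P (k+3)) (i : Fin (k+1)) :
    (dl i.castSucc c).1 (Fin.last (k+1)) = c.1 (Fin.last (k+2)) := by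
  simp only [dl, Function.comp]
  rw [Fin.succ_castSucc, succAbove_last']

theorem top_dl_last {k : ℕ} (c : pchains P (k+2)) :
    (dl (Fin.last k) c).1 (Fin.last k) < c.1 (Fin.last (k+1)) := by
  simp only [dl, Function.comp, Fin.succ_last, Fin.succAbove_last]
  exact c.2 (Fin.castSucc_lt_last _)

theorem app_dl_last {k : ℕ} (c : pchains P (k+2)) :
    app (dl (Fin.last k) c) (c.1 (Fin.last (k+1))) (top_dl_last c) = c := by
  apply Subtype.ext
  funext x
  simp only [dl, app, Function.comp]
  refine Fin.lastCases ?_ (fun x => ?_) x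
  · rw [Fin.snoc_last]
  · rw [Fin.snoc_castSucc]
    simp [Fin.succAbove_last]

theorem htpy_single (q : P) (b : BB P) (hb : top b ≤ q) :
    dG (sB q b) + sG q (dG (Finsupp.single b 1)) =
      Finsupp.single b 1 - (Finsupp.single b (1:ℚ) (pt q)) • Finsupp.single (pt q) 1 := by
  obtain ⟨k, c⟩ := b
  rcases hb.lt_or_eq with hb | hb
  · have hne : (⟨k, c⟩ : BB P) ≠ pt q := by
      intro h
      rw [h] at hb
      exact lt_irrefl _ hb
    have hb' : c.1 (Fin.last k) < q := hb
    rw [Finsupp.single_eq_of_ne' hne, zero_smul, sub_zero, sB_lt q k c hb', map_smul, dG_succ,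
      Fin.sum_univ_castSucc, smul_add]
    simp only [dl_app_last, Fin.val_last]
    rw [smul_smul, ← mul_pow, neg_one_mul, neg_neg, one_pow, one_smul]
    cases k with
    | zero => rw [dG_zero]; simp
    | succ k =>
      rw [dG_succ, map_sum, Finset.smul_sum, add_right_comm, ← Finset.sum_add_distrib]
      convert zero_add _
      refine Finset.sum_eq_zero fun i _ => ?_
      rw [map_smul, sG_single, sB_lt q k _ ((dl_last_le i c).trans_lt hb'), dl_app c q hb' i]
      simp only [Fin.val_castSucc, smul_smul, pow_succ, ← add_smul]
      convert zero_smul ℚ _ using 2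
      ring
  · have hq : q = c.1 (Fin.last k) := hb.symm
    rw [sB, dif_neg (by rw [hb]; exact lt_irrefl _), map_zero, zero_add]
    cases k with
    | zero =>
      have : (⟨0, c⟩ : BB P) = pt q := by
        rw [pt]
        congr 1
        apply Subtype.ext
        funext x
        rw [hq, show x = Fin.last 0 from Fin.ext (by omega)]
      rw [dG_zero, this]
      simp
    | succ k =>
      have hne : (⟨k+1, c⟩ : BB P) ≠ pt q := by
        intro h
        have := congrArg Sigma.fst h
        simp [pt] at this
      rw [Finsupp.single_eq_of_ne' hne, zero_smul, sub_zero, dG_succ, map_sum,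
        Fin.sum_univ_castSucc]
      have h1 : sG q (((-1 : ℚ)^((Fin.last k : Fin (k+1)):ℕ)) •
          Finsupp.single (⟨k, dl (Fin.last k) c⟩ : BB P) (1:ℚ)) =
          Finsupp.single (⟨k+1, c⟩ : BB P) 1 := by
        subst hq
        rw [map_smul, sG_single, sB_lt _ k _ (top_dl_last c)]
        simp only [app_dl_last]
        rw [Fin.val_last, smul_smul, ← mul_pow, neg_one_mul, neg_neg, one_pow, one_smul]
      rw [h1]
      convert zero_add _
      refine Finset.sum_eq_zero fun i _ => ?_
      rw [map_smul, sG_single, sB, dif_neg, smul_zero]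
      cases k with
      | zero => exact i.elim0
      | succ k =>
        rw [hq]
        have : top (⟨k+1, dl i.castSucc c⟩ : BB P) = c.1 (Fin.last (k+2)) := top_dl_castSucc c i
        rw [this]
        exact lt_irrefl _

theorem htpy (q : P) (g : GG P) (hg : g ∈ GI (Set.Iic q)) :
    dG (sG q g) + sG q (dG g) = g - (g (pt q)) • Finsupp.single (pt q) 1 := by
  have := supp_map _ (dG.comp (sG q) + (sG q).comp dG -
    (LinearMap.id - (LinearMap.toSpanSingleton ℚ (GG P) (Finsupp.single (pt q) 1)).comp
      (Finsupp.lapply (pt q)))) ⊥ ?_ g hg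
  · rw [Submodule.mem_bot] at this
    simp only [LinearMap.sub_apply, LinearMap.add_apply, LinearMap.comp_apply, LinearMap.id_apply,
      Finsupp.lapply_apply, LinearMap.toSpanSingleton_apply] at this
    exact sub_eq_zero.1 this
  · intro b hb
    rw [Submodule.mem_bot]
    simp only [LinearMap.sub_apply, LinearMap.add_apply, LinearMap.comp_apply, LinearMap.id_apply,
      Finsupp.lapply_apply, LinearMap.toSpanSingleton_apply]
    rw [sG_single, htpy_single q b hb, sub_self]

theorem sG_mem (q : P) (g : GG P) : sG q g ∈ GI (Set.Iic q) := by
  refine supp_map Set.univ (sG q) _ ?_ g (by simp [Finsupp.supported_univ])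
  intro b _
  rw [sG_single, sB]
  split_ifs with h
  · refine Submodule.smul_mem _ _ (GI_single ?_ _)
    have : top (⟨b.1+1, app b.2 q h⟩ : BB P) = q := by
      simp [top, app]
    rw [this]
    exact Set.mem_Iic.2 le_rfl
  · exact zero_mem _

end Chains
end GM

namespace GM
open Finsupp

section Arr
variable {P : Type} [PartialOrder P] {E : Type} [NormedAddCommGroup E] [NormedSpace ℝ E]

/-- Arrangement data. -/
structure Arr (P : Type) [PartialOrder P] (E : Type) [NormedAddCommGroup E] [NormedSpace ℝ E] where
  X : P → Set E
  h : P → ℕ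
  gen : P → Co E
  closed : ∀ p, IsClosed (X p)
  mono : ∀ p q, p ≤ q → X p ⊆ X q
  anti : ∀ p q, p < q → h q < h p
  inter : ∀ p q x, x ∈ X p → x ∈ X q → ∃ r, r ≤ p ∧ r ≤ q ∧ x ∈ X r
  isgen : ∀ p, IsGen (X p) (h p) (gen p)

namespace Arr
variable (A : Arr P E)

theorem h_chain {k : ℕ} (c : pchains P (k+1)) : A.h (c.1 (Fin.last k)) + k ≤ A.h (c.1 0) := by
  induction k with
  | zero => exact le_rfl
  | succ k ih =>
    have h1 := ih (dl (Fin.last k) c)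
    have h2 := A.anti _ _ (top_dl_last c)
    rw [dl_zero] at h1
    omega

structure Inv (k : ℕ) (a : pchains P (k+1) → Co E) : Prop where
  mem : ∀ c, a c ∈ CX (A.X (c.1 (Fin.last k)))
  homog : ∀ c, pr (A.h (c.1 0) - k) (a c) = a c
  cyc : ∀ c : pchains P (k+2), delta (∑ i : Fin (k+1), ((-1 : ℚ)^(i:ℕ)) • a (dl i c)) = 0

theorem inv_zero : A.Inv 0 (fun c => A.gen (c.1 0)) where
  mem c := (A.isgen _).mem
  homog c := (A.isgen _).homog
  cyc c := by simp [(A.isgen _).cocycle]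

theorem inv_step (k : ℕ) (a : pchains P (k+1) → Co E) (ha : A.Inv k a) :
    ∃ b : pchains P (k+2) → Co E, A.Inv (k+1) b ∧
      ∀ c, delta (b c) = ∑ i : Fin (k+1), ((-1 : ℚ)^(i:ℕ)) • a (dl i c) := by
  have key : ∀ c : pchains P (k+2), ∃ b : Co E, b ∈ CX (A.X (c.1 (Fin.last (k+1)))) ∧
      pr (A.h (c.1 0) - (k+1)) b = b ∧
      delta b = ∑ i : Fin (k+1), ((-1 : ℚ)^(i:ℕ)) • a (dl i c) := by
    intro c
    set f := ∑ i : Fin (k+1), ((-1 : ℚ)^(i:ℕ)) • a (dl i c) with hf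
    have hc := A.h_chain c
    set q := c.1 (Fin.last (k+1)) with hq
    have fm : f ∈ CX (A.X q) := sum_mem fun i _ => Submodule.smul_mem _ _
      (CX_mono (A.mono _ _ (dl_last_le i c)) (ha.mem _))
    have fh : pr (A.h (c.1 0) - k) f = f := by
      rw [hf, map_sum]
      refine Finset.sum_congr rfl fun i _ => ?_
      have := ha.homog (dl i c)
      rw [dl_zero] at this
      rw [map_smul, this]
    obtain ⟨t, g, hg, e⟩ := (A.isgen q).gen f fm (ha.cyc c)
    refine ⟨pr (A.h (c.1 0) - (k+1)) g, pr_mem hg _, by rw [pr_pr, if_pos rfl], ?_⟩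
    have hj : A.h (c.1 0) - (k+1) + 1 = A.h (c.1 0) - k := by omega
    rw [delta_pr, hj, ← fh, e, map_add, map_smul]
    have h0 : pr (A.h (c.1 0) - k) (A.gen q) = 0 := by
      rw [← (A.isgen q).homog, pr_pr, if_neg (by omega)]
    rw [h0, smul_zero, zero_add]
  choose b b1 b2 b3 using key
  refine ⟨b, ⟨b1, b2, fun c => ?_⟩, b3⟩
  rw [map_sum]
  simp only [map_smul, b3]
  exact dbl a c

noncomputable def seq : ∀ k, {a : pchains P (k+1) → Co E // A.Inv k a}
  | 0 => ⟨_, A.inv_zero⟩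
  | k+1 => ⟨(A.inv_step k (seq k).1 (seq k).2).choose, (A.inv_step k (seq k).1 (seq k).2).choose_spec.1⟩

theorem seq_delta (k : ℕ) (c : pchains P (k+2)) : delta ((A.seq (k+1)).1 c) =
    ∑ i : Fin (k+1), ((-1 : ℚ)^(i:ℕ)) • (A.seq k).1 (dl i c) :=
  (A.inv_step k (A.seq k).1 (A.seq k).2).choose_spec.2 c

noncomputable def psi : GG P →ₗ[ℚ] Co E := Finsupp.linearCombination ℚ (fun b => (A.seq b.1).1 b.2)

theorem psi_single (b : BB P) : A.psi (Finsupp.single b 1) = (A.seq b.1).1 b.2 := by simp [psi]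

theorem psi_pt (q : P) : A.psi (Finsupp.single (pt q) 1) = A.gen q := by
  rw [psi_single]; rfl

theorem psi_dG (g : GG P) : A.psi (dG g) = delta (A.psi g) := by
  have : (A.psi.comp dG) = delta.comp A.psi := by
    apply lin_ext
    rintro ⟨k, c⟩
    rw [LinearMap.comp_apply, LinearMap.comp_apply, psi_single]
    cases k with
    | zero =>
      rw [dG_zero, map_zero]
      exact ((A.isgen _).cocycle).symm
    | succ k =>
      rw [dG_succ, map_sum, seq_delta]
      simp only [map_smul, psi_single]
  exact LinearMap.congr_fun this g

def XI (I : Set P) : Set E := ⋃ p ∈ I, A.X p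

theorem psi_mem (I : Set P) (g : GG P) (hg : g ∈ GI I) : A.psi g ∈ CX (A.XI I) := by
  refine supp_map _ A.psi _ ?_ g hg
  intro b hb
  rw [psi_single]
  exact CX_mono (Set.subset_biUnion_of_mem (u := A.X) hb) ((A.seq b.1).2.mem b.2)

def AA (I : Set P) : Prop := ∀ g ∈ GI I, ∀ c ∈ CX (A.XI I), dG g = 0 → A.psi g = delta c →
  ∃ g' ∈ GI I, ∃ c' ∈ CX (A.XI I), g = dG g' ∧ c = A.psi g' + delta c'

theorem XI_union (I J : Set P) : A.XI (I ∪ J) = A.XI I ∪ A.XI J := Set.biUnion_union _ _ _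

theorem XI_inter (I J : Set P) (hI : IsLowerSet I) (hJ : IsLowerSet J) :
    A.XI (I ∩ J) = A.XI I ∩ A.XI J := by
  ext x
  simp only [XI, Set.mem_iUnion, Set.mem_inter_iff, exists_prop]
  constructor
  · rintro ⟨p, ⟨h1, h2⟩, h3⟩
    exact ⟨⟨p, h1, h3⟩, p, h2, h3⟩
  · rintro ⟨⟨p, h1, h3⟩, q, h2, h4⟩
    obtain ⟨r, r1, r2, hr⟩ := A.inter p q x h3 h4
    exact ⟨r, ⟨hI r1 h1, hJ r2 h2⟩, hr⟩

theorem XI_closed [Finite P] (I : Set P) : IsClosed (A.XI I) :=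
  (Set.toFinite I).isClosed_biUnion fun p _ => A.closed p

theorem AA_union [Finite P] (I J : Set P) (hI : IsLowerSet I) (hJ : IsLowerSet J)
    (aI : A.AA I) (aJ : A.AA J) (aIJ : A.AA (I ∩ J)) : A.AA (I ∪ J) := by
  intro g hg c hc dg e
  obtain ⟨g1, hg1, g2, hg2, rfl⟩ := GI_union hg
  rw [XI_union] at hc ⊢
  obtain ⟨c1, hc1, c2, hc2, rfl⟩ := CX_union _ _ c hc
  have edg : dG g1 = - dG g2 := by rw [eq_neg_iff_add_eq_zero, ← map_add, dg]
  have hdg : dG g1 ∈ GI (I ∩ J) := GI_inter (dG_mem hI hg1)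
    (by rw [edg]; exact neg_mem (dG_mem hJ hg2))
  have eu : A.psi g1 - delta c1 = - (A.psi g2 - delta c2) := by
    rw [eq_neg_iff_add_eq_zero]
    rw [map_add, map_add] at e
    rw [sub_add_sub_comm, e, sub_self]
  obtain ⟨w, wI, wJ, hw⟩ := small (A.XI I) (A.XI J) (A.XI_closed I) (A.XI_closed J)
    (A.psi g1 - delta c1) (sub_mem (A.psi_mem I g1 hg1) (delta_mem hc1))
    (by rw [eu]; exact neg_mem (sub_mem (A.psi_mem J g2 hg2) (delta_mem hc2)))
    (by
      rw [map_sub, delta_delta, sub_zero, ← psi_dG, ← A.XI_inter I J hI hJ]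
      exact A.psi_mem _ _ hdg)
  rw [← A.XI_inter I J hI hJ] at hw
  obtain ⟨f, hf, y, hy, f1, f2⟩ := aIJ (dG g1) hdg _ hw (dG_dG _) (by
    rw [map_sub, map_sub, delta_delta, delta_delta, sub_zero, sub_zero, psi_dG])
  have iI := CX_mono (E := E) (Set.biUnion_subset_biUnion_left (t := A.X) (Set.inter_subset_left (s := I) (t := J)))
  have iJ := CX_mono (E := E) (Set.biUnion_subset_biUnion_left (t := A.X) (Set.inter_subset_right (s := I) (t := J)))
  have e1 : A.psi (g1 - f) = delta (c1 + w + y) := by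
    rw [map_sub, map_add, map_add, sub_eq_iff_eq_add]
    rw [sub_eq_iff_eq_add, sub_eq_iff_eq_add] at f2
    rw [f2]; abel
  obtain ⟨g1', hg1', c1', hc1', p1, p2⟩ := aI (g1 - f) (sub_mem hg1 (GI_mono Set.inter_subset_left hf))
    (c1 + w + y) (add_mem (add_mem hc1 wI) (iI hy)) (by rw [map_sub, f1, sub_self]) e1
  obtain ⟨g2', hg2', c2', hc2', q1, q2⟩ := aJ (g2 + f) (add_mem hg2 (GI_mono Set.inter_subset_right hf))
    (c2 - w - y) (sub_mem (sub_mem hc2 wJ) (iJ hy)) (by rw [map_add, ← f1, edg, add_neg_cancel]) (by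
      have h1 : g2 + f = (g1 + g2) - (g1 - f) := by abel
      rw [h1, map_sub, e, e1, ← map_sub]
      congr 1
      abel)
  refine ⟨g1' + g2', add_mem (GI_mono Set.subset_union_left hg1') (GI_mono Set.subset_union_right hg2'),
    c1' + c2', add_mem (CX_mono Set.subset_union_left hc1') (CX_mono Set.subset_union_right hc2'), ?_, ?_⟩
  · rw [map_add, ← p1, ← q1]; abel
  · rw [map_add, map_add, add_add_add_comm, ← p2, ← q2]; abel

theorem XI_Iic (q : P) : A.XI (Set.Iic q) = A.X q := by
  apply subset_antisymm
  · exact Set.iUnion₂_subset fun p hp => A.mono p q hp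
  · exact Set.subset_biUnion_of_mem (u := A.X) (Set.mem_Iic.2 le_rfl)

theorem AA_Iic (q : P) : A.AA (Set.Iic q) := by
  intro g hg c hc dg e
  have h1 := htpy q g hg
  rw [dg, map_zero, add_zero] at h1
  have ms : A.psi (sG q g) ∈ CX (A.X q) := by
    have := A.psi_mem _ _ (sG_mem q g)
    rwa [XI_Iic] at this
  rw [XI_Iic] at hc ⊢
  have h2 : g (pt q) • A.gen q = delta (c - A.psi (sG q g)) := by
    rw [map_sub, ← e, ← psi_dG, h1, map_sub, map_smul, psi_pt]
    abel
  have h3 := (A.isgen q).inj _ _ (sub_mem hc ms) h2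
  rw [h3, zero_smul] at h2
  rw [h3, zero_smul, sub_zero] at h1
  obtain ⟨t, c', hc', e'⟩ := (A.isgen q).gen _ (sub_mem hc ms) h2.symm
  refine ⟨sG q g + t • Finsupp.single (pt q) 1, add_mem (sG_mem q g)
    (Submodule.smul_mem _ _ (GI_single (Set.mem_Iic.2 le_rfl) _)), c', hc', ?_, ?_⟩
  · rw [map_add, map_smul, h1, pt, dG_zero, smul_zero, add_zero]
  · rw [map_add, map_smul, psi_pt, add_assoc, ← e']
    abel

theorem AA_all [Finite P] : ∀ (k : ℕ) (I : Set P), I.ncard = k → IsLowerSet I → A.AA I := by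
  intro k
  induction k using Nat.strong_induction_on with
  | _ k ih =>
    intro I hk hI
    rcases I.eq_empty_or_nonempty with rfl | hne
    · intro g hg c hc dg e
      refine ⟨0, zero_mem _, 0, zero_mem _, ?_, ?_⟩
      · rw [map_zero]
        have : g ∈ Finsupp.supported ℚ ℚ (∅ : Set (BB P)) := hg
        rwa [Finsupp.supported_empty, Submodule.mem_bot] at this
      · rw [map_zero, map_zero, add_zero]
        funext m σ
        refine hc m σ fun t ht => ?_
        simp [XI] at ht
    · obtain ⟨q, hq⟩ := (Set.toFinite I).exists_maximal hne
      have hqI : q ∈ I := hq.1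
      have hL : IsLowerSet (I \ {q}) := by
        rintro a b hab ⟨ha, haq⟩
        refine ⟨hI hab ha, ?_⟩
        rintro rfl
        exact haq (le_antisymm (hq.2 ha hab) hab)
      have hlt : (I \ {q}).ncard < k := by
        rw [← hk]
        exact Set.ncard_diff_singleton_lt_of_mem hqI
      have hU : I = Set.Iic q ∪ (I \ {q}) := by
        ext x
        constructor
        · intro hx
          by_cases h : x = q
          · exact Or.inl (Set.mem_Iic.2 h.le)
          · exact Or.inr ⟨hx, h⟩
        · rintro (hx | hx)
          · exact hI hx hqI
          · exact hx.1
      rw [hU]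
      refine A.AA_union _ _ (isLowerSet_Iic q) hL (A.AA_Iic q) (ih _ hlt _ rfl hL)
        (ih _ (lt_of_le_of_lt (Set.ncard_le_ncard Set.inter_subset_right) hlt) _ rfl
          ((isLowerSet_Iic q).inter hL))

theorem AA_univ [Finite P] (g : GG P) (c : Co E) (hc : c ∈ CX (⋃ p, A.X p)) (dg : dG g = 0)
    (e : A.psi g = delta c) :
    ∃ g', ∃ c' ∈ CX (⋃ p, A.X p), g = dG g' ∧ c = A.psi g' + delta c' := by
  have hX : A.XI Set.univ = ⋃ p, A.X p := by simp [XI]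
  obtain ⟨g', -, c', hc', h⟩ := A.AA_all _ Set.univ rfl isLowerSet_univ g
    (by simp [GI, Finsupp.mem_supported]) c (by rwa [hX]) dg e
  exact ⟨g', c', by rwa [← hX], h⟩

end Arr
end Arr
end GM

namespace GM
open Finsupp

section Emb
variable {P : Type} [PartialOrder P]

theorem eb_mono (p : P) (k : ℕ) (c : pchains {q // p < q} k) :
    StrictMono (Fin.cons p (fun j => (c.1 j).1) : Fin (k+1) → P) := by
  intro i j
  refine Fin.cases ?_ (fun i => ?_) i <;> refine Fin.cases ?_ (fun j => ?_) j
  · intro h; exact absurd h (lt_irrefl _)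
  · intro _; simpa using (c.1 j).2
  · intro h; simp at h
  · intro h; simpa using c.2 (Fin.succ_lt_succ_iff.1 h)

def eb (p : P) (k : ℕ) (c : pchains {q // p < q} k) : BB P := ⟨k, ⟨_, eb_mono p k c⟩⟩

theorem eb_inj (p : P) (k : ℕ) : Function.Injective (eb p k) := by
  intro c c' h
  have h1 := eq_of_heq (Sigma.mk.inj_iff.1 h).2
  have h2 := congrArg Subtype.val h1
  apply Subtype.ext
  funext j
  apply Subtype.ext
  have := congrFun h2 j.succ
  simpa using this

theorem eb_surj (b : BB P) : ∃ c, b = eb (b.2.1 0) b.1 c := by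
  obtain ⟨k, c⟩ := b
  refine ⟨⟨fun j => ⟨c.1 j.succ, c.2 (Fin.succ_pos j)⟩, fun i j h => c.2 (Fin.succ_lt_succ_iff.2 h)⟩, ?_⟩
  simp only [eb]
  congr 1
  apply Subtype.ext
  funext x
  refine Fin.cases ?_ (fun x => ?_) x <;> simp

theorem eb_fst (p : P) (k : ℕ) (c) : (eb p k c).1 = k := rfl
theorem eb_snd (p : P) (k : ℕ) (c) : (eb p k c).2.1 0 = p := rfl

noncomputable def emb (p : P) (k : ℕ) : (pchains {q // p < q} k →₀ ℚ) →ₗ[ℚ] GG P :=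
  Finsupp.lmapDomain ℚ ℚ (eb p k)

noncomputable def cmp (p : P) (k : ℕ) : GG P →ₗ[ℚ] (pchains {q // p < q} k →₀ ℚ) :=
  Finsupp.lcomapDomain (eb p k) (eb_inj p k)

theorem emb_single (p : P) (k : ℕ) (c) : emb p k (Finsupp.single c 1) = Finsupp.single (eb p k c) 1 := by
  simp [emb]

theorem cmp_apply (p : P) (k : ℕ) (g : GG P) (c) : cmp p k g c = g (eb p k c) := rfl

theorem cmp_emb (p : P) (k : ℕ) (y) : cmp p k (emb p k y) = y := by
  ext c
  rw [cmp_apply]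
  exact Finsupp.mapDomain_apply (eb_inj p k) y c

theorem cmp_single (p : P) (k : ℕ) (c) : cmp p k (Finsupp.single (eb p k c) 1) = Finsupp.single c 1 := by
  rw [← emb_single, cmp_emb]

theorem emb_cmp_single (b : BB P) : ∀ (p : P) (k : ℕ), b.2.1 0 = p → b.1 = k →
    emb p k (cmp p k (Finsupp.single b 1)) = Finsupp.single b 1 := by
  rintro p k rfl rfl
  obtain ⟨c, hc⟩ := eb_surj b
  have h : Finsupp.single b (1:ℚ) = Finsupp.single (eb _ _ c) 1 := congrArg (Finsupp.single · 1) hc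
  rw [h, cmp_single, emb_single]

open Classical in
theorem cmp_single_ne (p : P) (k : ℕ) (b : BB P) (h : b.2.1 0 ≠ p ∨ b.1 ≠ k) :
    cmp p k (Finsupp.single b 1) = 0 := by
  ext c
  rw [cmp_apply, Finsupp.single_apply, if_neg]
  · rfl
  · rintro rfl
    rcases h with h | h
    · exact h rfl
    · exact h rfl

theorem cmp_emb_ne (p p' : P) (k k' : ℕ) (h : p ≠ p') (y) : cmp p' k' (emb p k y) = 0 := by
  have : (cmp p' k').comp (emb p k) = 0 := by
    apply lin_ext
    intro c
    rw [LinearMap.comp_apply, emb_single, cmp_single_ne _ _ _ (Or.inl h)]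
    rfl
  exact LinearMap.congr_fun this y

theorem simpBdry_single {Q : Type} [Preorder Q] (k : ℕ) (c : pchains Q (k+1)) :
    simpBdry ℚ ℚ Q k (Finsupp.single c 1) = ∑ i : Fin (k+1), ((-1 : ℚ)^(i:ℕ)) •
      Finsupp.single (⟨c.1 ∘ i.succAbove, c.2.comp (Fin.strictMono_succAbove i)⟩ : pchains Q k) (1:ℚ) := by
  simp [simpBdry]

theorem dG_eb (p : P) (k : ℕ) (c : pchains {q // p < q} (k+1)) :
    dG (Finsupp.single (eb p (k+1) c) 1) = emb p k (simpBdry ℚ ℚ _ k (Finsupp.single c 1)) := by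
  rw [simpBdry_single, map_sum]
  have := dG_succ k (eb p (k+1) c).2
  refine Eq.trans this ?_
  refine Finset.sum_congr rfl fun i _ => ?_
  rw [map_smul, emb_single]
  congr 3
  apply Subtype.ext
  funext x
  simp only [dl, eb]
  refine Fin.cases ?_ (fun x => ?_) x <;> simp

theorem dG_emb (p : P) (k : ℕ) (y : pchains {q // p < q} (k+1) →₀ ℚ) :
    dG (emb p (k+1) y) = emb p k (simpBdry ℚ ℚ _ k y) := by
  have : dG.comp (emb p (k+1)) = (emb p k).comp (simpBdry ℚ ℚ _ k) := by
    apply lin_ext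
    intro c
    rw [LinearMap.comp_apply, emb_single, dG_eb]
    rfl
  exact LinearMap.congr_fun this y

theorem dG_emb_zero (p : P) (y : pchains {q // p < q} 0 →₀ ℚ) : dG (emb p 0 y) = 0 := by
  have : dG.comp (emb p 0) = 0 := by
    apply lin_ext
    intro c
    rw [LinearMap.comp_apply, emb_single]
    exact dG_zero _
  exact LinearMap.congr_fun this y

theorem cmp_dG (p : P) (k : ℕ) (g : GG P) : cmp p k (dG g) = simpBdry ℚ ℚ _ k (cmp p (k+1) g) := by
  have : (cmp p k).comp dG = (simpBdry ℚ ℚ _ k).comp (cmp p (k+1)) := by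
    apply lin_ext
    intro b
    rw [LinearMap.comp_apply, LinearMap.comp_apply]
    by_cases h : b.2.1 0 = p ∧ b.1 = k+1
    · obtain ⟨c, hc⟩ := eb_surj b
      obtain ⟨h1, h2⟩ := h
      rw [hc]
      clear hc
      revert c
      rw [h1, h2]
      intro c
      rw [dG_eb, cmp_emb, cmp_single]
    · rw [cmp_single_ne p (k+1) b (by tauto), map_zero]
      obtain ⟨l, c⟩ := b
      cases l with
      | zero => rw [dG_zero, map_zero]
      | succ l =>
        rw [dG_succ, map_sum]
        refine Finset.sum_eq_zero fun i _ => ?_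
        rw [map_smul, cmp_single_ne, smul_zero]
        rw [dl_zero]
        simp only at h ⊢
        rw [not_and_or] at h
        refine h.imp id fun h h' => h (by rw [h'])
  exact LinearMap.congr_fun this g

end Emb

section EE
variable {P : Type} [PartialOrder P] [Fintype P] {E : Type} [NormedAddCommGroup E] [NormedSpace ℝ E]
variable (A : Arr P E) (i : ℕ)

abbrev PI : Type := {p : P // i + 1 ≤ A.h p}

open Classical in
noncomputable def EE (z : ∀ p : PI A i, (pchains {q // p.1 < q} (A.h p.1 - i - 1) →₀ ℚ)) : GG P :=
  ∑ p : PI A i, emb p.1 (A.h p.1 - i - 1) (z p)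

open Classical in
theorem EE_add (z w) : EE A i (z + w) = EE A i z + EE A i w := by
  simp [EE, Finset.sum_add_distrib]

open Classical in
theorem EE_smul (r : ℚ) (z) : EE A i (r • z) = r • EE A i z := by
  simp [EE, Finset.smul_sum]

open Classical in
theorem cmp_EE (z) (p : PI A i) : cmp p.1 (A.h p.1 - i - 1) (EE A i z) = z p := by
  rw [EE, map_sum, Finset.sum_eq_single p]
  · exact cmp_emb _ _ _
  · intro p' _ h
    exact cmp_emb_ne _ _ _ _ (fun e => h (Subtype.ext e)) _
  · intro h; exact absurd (Finset.mem_univ p) h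

open Classical in
theorem dG_EE (z : ∀ p : PI A i, (pchains {q // p.1 < q} (A.h p.1 - i - 1) →₀ ℚ))
    (hz : ∀ p, z p ∈ simpCycles ℚ ℚ _ (A.h p.1 - i - 1)) : dG (EE A i z) = 0 := by
  rw [EE, map_sum]
  refine Finset.sum_eq_zero fun p _ => ?_
  have h1 := hz p
  generalize z p = y at h1
  generalize A.h p.1 - i - 1 = k at y h1
  cases k with
  | zero => exact dG_emb_zero _ _
  | succ k =>
    rw [dG_emb]
    have : simpBdry ℚ ℚ _ k y = 0 := h1
    rw [this, map_zero]

theorem cmp_cycles (p : P) (k : ℕ) (g : GG P) (hg : dG g = 0) :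
    cmp p k g ∈ simpCycles ℚ ℚ {q // p < q} k := by
  cases k with
  | zero => exact Submodule.mem_top
  | succ k =>
    change simpBdry ℚ ℚ _ k _ = 0
    rw [← cmp_dG, hg, map_zero]

open Classical in
theorem EE_bdry (z : ∀ p : PI A i, (pchains {q // p.1 < q} (A.h p.1 - i - 1) →₀ ℚ))
    (hz : ∀ p, z p ∈ LinearMap.range (simpBdry ℚ ℚ {q // p.1 < q} (A.h p.1 - i - 1))) :
    ∃ g, EE A i z = dG g := by
  choose y hy using hz
  refine ⟨∑ p, emb p.1 _ (y p), ?_⟩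
  rw [EE, map_sum]
  refine Finset.sum_congr rfl fun p _ => ?_
  rw [dG_emb, hy]

open Classical in
theorem pr_psi (g : GG P) : pr (i+1) (A.psi g) =
    A.psi (EE A i (fun p => cmp p.1 (A.h p.1 - i - 1) g)) := by
  have : (pr (i+1)).comp A.psi = A.psi.comp (∑ p : PI A i, (emb p.1 (A.h p.1 - i - 1)).comp
      (cmp p.1 (A.h p.1 - i - 1))) := by
    apply lin_ext
    intro b
    rw [LinearMap.comp_apply, LinearMap.comp_apply, LinearMap.sum_apply]
    have hh := (A.seq b.1).2.homog b.2
    have hk := A.h_chain b.2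
    rw [Arr.psi_single, ← hh, pr_pr, hh]
    split_ifs with h
    · rw [Finset.sum_eq_single (⟨b.2.1 0, by omega⟩ : PI A i)]
      · rw [LinearMap.comp_apply]
        have hk' : A.h (b.2.1 0) - i - 1 = b.1 := by omega
        rw [emb_cmp_single b _ _ rfl hk'.symm, Arr.psi_single]
      · intro p _ hp
        rw [LinearMap.comp_apply, cmp_single_ne _ _ _ (Or.inl (fun e => hp (Subtype.ext e.symm))), map_zero]
      · intro h; exact absurd (Finset.mem_univ _) h
    · rw [Finset.sum_eq_zero, map_zero]
      rintro ⟨p, hp⟩ -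
      rw [LinearMap.comp_apply, cmp_single_ne, map_zero]
      by_contra hcon
      push Not at hcon
      obtain ⟨h1, h2⟩ := hcon
      simp only at h1 h2
      rw [h1] at h
      omega
  have := LinearMap.congr_fun this g
  simpa [EE] using this

theorem pr_psi_EE (z) : pr (i+1) (A.psi (EE A i z)) = A.psi (EE A i z) := by
  rw [pr_psi]
  congr 2
  funext p
  rw [cmp_EE]

/-! ### Cohomology of the complement, at the level of cochains -/

variable (x0 : E) (hx0 : x0 ∉ ⋃ p, A.X p)

theorem psi_memX (g : GG P) : A.psi g ∈ CX (⋃ p, A.X p) := by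
  have := A.psi_mem Set.univ g (by simp [GI, Finsupp.mem_supported])
  simpa [Arr.XI] using this

theorem delta_Kst (z : ∀ p : PI A i, (pchains {q // p.1 < q} (A.h p.1 - i - 1) →₀ ℚ))
    (hz : dG (EE A i z) = 0) : delta (Kst x0 (A.psi (EE A i z))) = A.psi (EE A i z) := by
  have h := cone_htpy x0 (A.psi (EE A i z))
  rw [← Arr.psi_dG, hz, map_zero, map_zero, add_zero] at h
  have h0 : A.psi (EE A i z) 0 (ContinuousMap.const _ x0) = 0 := by
    rw [← pr_psi_EE, pr_apply, if_neg (by omega)]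
  rw [h0, zero_smul, add_zero] at h
  exact h.symm

theorem surj_part (f : Co E) (hf : pr i f = f) (hd : delta f ∈ CX (⋃ p, A.X p)) :
    ∃ z : ∀ p : PI A i, (pchains {q // p.1 < q} (A.h p.1 - i - 1) →₀ ℚ),
      (∀ p, z p ∈ simpCycles ℚ ℚ _ (A.h p.1 - i - 1)) ∧ ∃ t : ℚ, (i ≠ 0 → t = 0) ∧
      ∃ g, ∃ c ∈ CX (⋃ p, A.X p), f = Kst x0 (A.psi (EE A i z)) + t • one0 + delta g + c := by
  obtain ⟨g', c', hc', e1, e2⟩ := A.AA_univ 0 (delta f) hd (map_zero _)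
    (by rw [delta_delta, map_zero])
  have e3 : delta f = A.psi (EE A i (fun p => cmp p.1 (A.h p.1 - i - 1) g')) + delta (pr i c') := by
    rw [← pr_psi, delta_pr, ← map_add, ← e2, ← delta_pr, hf]
  refine ⟨_, fun p => cmp_cycles p.1 _ g' e1.symm, (f - pr i c') 0 (ContinuousMap.const _ x0), ?_,
    Kst x0 (f - pr i c'), pr i c', pr_mem hc' i, ?_⟩
  · intro hi
    rw [← hf, ← map_sub, pr_apply, if_neg (Ne.symm hi)]
  · have h := cone_htpy x0 (f - pr i c')
    rw [map_sub delta, e3, add_sub_cancel_right] at h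
    rw [sub_eq_iff_eq_add] at h
    refine h.trans ?_
    simp only [Pi.sub_apply]
    abel

theorem inj_part (hx0 : x0 ∉ ⋃ p, A.X p)
    (z : ∀ p : PI A i, (pchains {q // p.1 < q} (A.h p.1 - i - 1) →₀ ℚ))
    (hz : ∀ p, z p ∈ simpCycles ℚ ℚ _ (A.h p.1 - i - 1)) (t : ℚ) (ht : i ≠ 0 → t = 0) (g c : Co E)
    (hc : c ∈ CX (⋃ p, A.X p)) (e : Kst x0 (A.psi (EE A i z)) + t • one0 = delta g + c) :
    t = 0 ∧ ∀ p, z p ∈ LinearMap.range (simpBdry ℚ ℚ {q // p.1 < q} (A.h p.1 - i - 1)) := by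
  have hd := dG_EE A i z hz
  have e1 := congrArg delta e
  rw [map_add, map_add, map_smul, delta_one0, smul_zero, add_zero, delta_delta, zero_add,
    delta_Kst A i x0 z hd] at e1
  obtain ⟨g', c', hc', e2, e3⟩ := A.AA_univ _ c hc hd e1
  constructor
  · have h := cone_htpy x0 (A.psi g')
    rw [psi_memX A g' 0 (ContinuousMap.const _ x0) (fun _ => hx0), zero_smul, add_zero,
      ← Arr.psi_dG, ← e2] at h
    rw [e3] at e
    have h2 := congrFun (congrFun h 0) (ContinuousMap.const _ x0)
    have h3 := congrFun (congrFun e 0) (ContinuousMap.const _ x0)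
    simp only [Pi.add_apply, Pi.smul_apply, delta_zero, one0, if_true, smul_eq_mul] at h2 h3
    linarith
  · intro p
    refine ⟨cmp p.1 _ g', ?_⟩
    rw [← cmp_dG, ← e2, cmp_EE]

theorem inj_conv (hx0 : x0 ∉ ⋃ p, A.X p)
    (z : ∀ p : PI A i, (pchains {q // p.1 < q} (A.h p.1 - i - 1) →₀ ℚ))
    (hz : ∀ p, z p ∈ LinearMap.range (simpBdry ℚ ℚ {q // p.1 < q} (A.h p.1 - i - 1))) :
    ∃ g, ∃ c ∈ CX (⋃ p, A.X p), Kst x0 (A.psi (EE A i z)) = delta g + c := by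
  obtain ⟨g', e⟩ := EE_bdry A i z hz
  have h := cone_htpy x0 (A.psi g')
  rw [psi_memX A g' 0 (ContinuousMap.const _ x0) (fun _ => hx0), zero_smul, add_zero,
      ← Arr.psi_dG, ← e] at h
  refine ⟨- Kst x0 (A.psi g'), A.psi g', psi_memX A g', ?_⟩
  rw [map_neg]
  rw [eq_comm, neg_add_eq_iff_eq_add]
  exact h

end EE
end GM

namespace GM
open CategoryTheory Opposite

section Bridge
variable {M : Type} [TopologicalSpace M]

abbrev SSg (M : Type) [TopologicalSpace M] (i : ℕ) : Type :=
  (TopCat.toSSet.obj (TopCat.of M)).obj (op (SimplexCategory.mk i))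

noncomputable def eqv (i : ℕ) : SSg M i ≃ C(Dl i, M) :=
  TopCat.toSSetObjEquiv (TopCat.of M) (op (SimplexCategory.mk i))

noncomputable def toCh (i : ℕ) : (SSg M i →₀ ℚ) ≃ₗ[ℚ] (singChainsQ (TopCat.of M)).X i :=
  LinearEquiv.refl ℚ (SSg M i →₀ ℚ)

noncomputable def gn (i : ℕ) (σ : C(Dl i, M)) : (singChainsQ (TopCat.of M)).X i :=
  toCh i (Finsupp.single ((eqv i).symm σ) 1)

noncomputable def res (i : ℕ) : (C(Dl i, M) → ℚ) →ₗ[ℚ] Module.Dual ℚ ((singChainsQ (TopCat.of M)).X i) where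
  toFun f := (Finsupp.linearCombination ℚ (fun s => f (eqv i s))).comp (toCh i).symm.toLinearMap
  map_add' f g := by
    apply LinearMap.ext
    intro x
    obtain ⟨y, rfl⟩ := (toCh i).surjective x
    simp [Finsupp.linearCombination_apply, mul_add, Finsupp.sum_add]
  map_smul' r f := by
    apply LinearMap.ext
    intro x
    obtain ⟨y, rfl⟩ := (toCh i).surjective x
    simp [Finsupp.linearCombination_apply, Finsupp.mul_sum]
    exact Finsupp.sum_congr fun _ _ => by ring

theorem res_gn (i : ℕ) (f : C(Dl i, M) → ℚ) (σ) : res i f (gn i σ) = f σ := by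
  simp [res, gn]

theorem ch_ext {i : ℕ} {N : Type} [AddCommGroup N] [Module ℚ N]
    {φ ψ : ((singChainsQ (TopCat.of M)).X i) →ₗ[ℚ] N} (h : ∀ σ, φ (gn i σ) = ψ (gn i σ)) :
    φ = ψ := by
  have : φ.comp (toCh i).toLinearMap = ψ.comp (toCh i).toLinearMap := by
    apply lin_ext
    intro s
    have := h (eqv i s)
    rw [gn, Equiv.symm_apply_apply] at this
    exact this
  apply LinearMap.ext
  intro x
  obtain ⟨y, rfl⟩ := (toCh i).surjective x
  exact LinearMap.congr_fun this y

theorem delta_face (i : ℕ) (j : Fin (i+2)) (s : SSg M (i+1)) :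
    eqv i ((TopCat.toSSet.obj (TopCat.of M)).δ j s) = face j (eqv (i+1) s) := by
  ext t
  rw [face, pull_apply]
  have h : comb (vtx (i+1) ∘ j.succAbove) t = stdSimplex.map j.succAbove t := by
    apply Dl_ext
    intro x
    rw [comb_apply]
    simp [vtx_apply, stdSimplex.map_coe, FunOnFinite.linearMap_apply_apply, Finset.sum_ite, eq_comm]
  rw [h]
  rfl

theorem objD_apply (Y : SimplicialObject (ModuleCat.{0} ℚ)) (i : ℕ)
    (x : Y.obj (op (SimplexCategory.mk (i+1)))) :
    (AlgebraicTopology.AlternatingFaceMapComplex.objD Y i).hom x =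
      ∑ j : Fin (i+2), ((-1 : ℚ)^(j:ℕ)) • ((Y.δ j).hom x : Y.obj (op (SimplexCategory.mk i))) := by
  rw [AlgebraicTopology.AlternatingFaceMapComplex.objD, ModuleCat.hom_sum, LinearMap.sum_apply]
  refine Finset.sum_congr rfl fun j _ => ?_
  rw [ModuleCat.hom_zsmul, LinearMap.smul_apply, ← Int.cast_smul_eq_zsmul ℚ]
  push_cast
  rfl

theorem d_gn (i : ℕ) (σ : C(Dl (i+1), M)) :
    ((singChainsQ (TopCat.of M)).d (i+1) i).hom (gn (i+1) σ) =
      ∑ j : Fin (i+2), ((-1 : ℚ)^(j:ℕ)) • gn i (face j σ) := by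
  have h : (singChainsQ (TopCat.of M)).d (i+1) i = _ := AlgebraicTopology.alternatingFaceMapComplex_obj_d _ i
  rw [h]
  refine (objD_apply _ i _).trans ?_
  refine Finset.sum_congr rfl fun j _ => ?_
  have h1 : (SimplicialObject.δ (((SimplicialObject.whiskering _ _).obj (ModuleCat.free ℚ)).obj
      (TopCat.toSSet.obj (TopCat.of M))) j).hom (gn (i+1) σ) = gn i (face j σ) := by
    have h2 : (SimplicialObject.δ (((SimplicialObject.whiskering _ _).obj (ModuleCat.free ℚ)).obj
      (TopCat.toSSet.obj (TopCat.of M))) j).hom (gn (i+1) σ) =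
      toCh i (Finsupp.mapDomain (fun s => (TopCat.toSSet.obj (TopCat.of M)).δ j s)
        (Finsupp.single ((eqv (i+1)).symm σ) 1)) := rfl
    rw [h2, Finsupp.mapDomain_single, gn]
    congr 2
    rw [Equiv.eq_symm_apply, delta_face, Equiv.apply_symm_apply]
  exact congrArg (fun y : (singChainsQ (TopCat.of M)).X i => ((-1 : ℚ)^(j:ℕ)) • y) h1

end Bridge
end GM

namespace GM
open CategoryTheory Opposite

theorem dual_lemma (S : ShortComplex (ModuleCat.{0} ℚ)) {V W : Type} [AddCommGroup V] [Module ℚ V]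
    [AddCommGroup W] [Module ℚ W] (π : V →ₗ[ℚ] W) (hπ : Function.Surjective π)
    (Θ : V →ₗ[ℚ] Module.Dual ℚ S.X₂)
    (h1 : ∀ v x, Θ v (S.f.hom x) = 0)
    (h2 : ∀ φ : Module.Dual ℚ S.X₂, (∀ x, φ (S.f.hom x) = 0) →
      ∃ v, ∃ ξ : Module.Dual ℚ S.X₃, φ = Θ v + ξ.comp S.g.hom)
    (h3 : ∀ v, (∃ ξ : Module.Dual ℚ S.X₃, Θ v = ξ.comp S.g.hom) ↔ π v = 0) :
    Module.finrank ℚ S.homology = Module.finrank ℚ W := by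
  let K := LinearMap.ker S.g.hom
  let R : Submodule ℚ K := LinearMap.range S.moduleCatToCycles
  let L : V →ₗ[ℚ] Module.Dual ℚ K := K.subtype.dualMap.comp Θ
  have hL : ∀ v (x : K), L v x = Θ v x.1 := fun v x => rfl
  have hker : LinearMap.ker L = LinearMap.ker π := by
    ext v
    rw [LinearMap.mem_ker, LinearMap.mem_ker, ← h3]
    constructor
    · intro h
      have : Θ v ∈ LinearMap.range S.g.hom.dualMap := by
        rw [LinearMap.range_dualMap_eq_dualAnnihilator_ker, Submodule.mem_dualAnnihilator]
        intro w hw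
        have := LinearMap.congr_fun h ⟨w, hw⟩
        exact this
      obtain ⟨ξ, hξ⟩ := this
      exact ⟨ξ, hξ.symm⟩
    · rintro ⟨ξ, hξ⟩
      apply LinearMap.ext
      intro x
      rw [hL, hξ]
      have : S.g.hom x.1 = 0 := x.2
      simp [this]
  have hrange : LinearMap.range L = R.dualAnnihilator := by
    apply le_antisymm
    · rintro _ ⟨v, rfl⟩
      rw [Submodule.mem_dualAnnihilator]
      rintro _ ⟨x, rfl⟩
      exact h1 v x
    · intro φ hφ
      rw [Submodule.mem_dualAnnihilator] at hφ
      obtain ⟨ψ, hψ⟩ := LinearMap.exists_extend φ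
      obtain ⟨v, ξ, e⟩ := h2 ψ (fun x => by
        have := hφ _ ⟨x, rfl⟩
        rw [← hψ] at this
        exact this)
      refine ⟨v, ?_⟩
      apply LinearMap.ext
      intro x
      rw [hL, ← hψ, e]
      have : S.g.hom x.1 = 0 := x.2
      simp [this]
  have e1 : Module.finrank ℚ S.homology = Module.finrank ℚ (K ⧸ R) :=
    (S.moduleCatHomologyIso.toLinearEquiv).finrank_eq
  have e2 : Module.finrank ℚ (V ⧸ LinearMap.ker L) = Module.finrank ℚ (LinearMap.range L) :=
    L.quotKerEquivRange.finrank_eq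
  have e3 : Module.finrank ℚ (V ⧸ LinearMap.ker π) = Module.finrank ℚ W :=
    (π.quotKerEquivOfSurjective hπ).finrank_eq
  have e4 : Module.finrank ℚ (Module.Dual ℚ (K ⧸ R)) = Module.finrank ℚ R.dualAnnihilator :=
    R.dualQuotEquivDualAnnihilator.finrank_eq
  rw [e1, ← Subspace.dual_finrank_eq, e4, ← hrange, ← e2, hker, e3]

theorem dual_lemma' (C : ChainComplex (ModuleCat.{0} ℚ) ℕ) (i : ℕ)
    {V W : Type} [AddCommGroup V] [Module ℚ V]
    [AddCommGroup W] [Module ℚ W] (π : V →ₗ[ℚ] W) (hπ : Function.Surjective π)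
    (Θ : V →ₗ[ℚ] Module.Dual ℚ (C.X i))
    (h1 : ∀ v x, Θ v ((C.d (i+1) i).hom x) = 0)
    (h2 : ∀ φ : Module.Dual ℚ (C.X i), (∀ x, φ ((C.d (i+1) i).hom x) = 0) →
      ∃ v, ∃ ξ : Module.Dual ℚ (C.X (i-1)), φ = Θ v + ξ.comp (C.d i (i-1)).hom)
    (h3 : ∀ v, (∃ ξ : Module.Dual ℚ (C.X (i-1)), Θ v = ξ.comp (C.d i (i-1)).hom) ↔ π v = 0) :
    Module.finrank ℚ (C.homology i) = Module.finrank ℚ W := by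
  have e := (ShortComplex.homologyMapIso (C.isoSc' (i+1) i (i-1) (by simp)
    (by cases i <;> simp))).toLinearEquiv.finrank_eq
  exact Eq.trans e (dual_lemma (C.sc' (i+1) i (i-1)) π hπ Θ h1 h2 h3)

section ResE
variable {E : Type} [TopologicalSpace E] (X : Set E)

abbrev MM (X : Set E) : Type := {x : E // x ∉ X}

/-- inclusion of a simplex of the complement -/
def inc {i : ℕ} (σ : C(Dl i, MM X)) : C(Dl i, E) := ⟨fun t => (σ t).1, by fun_prop⟩

noncomputable def resE (i : ℕ) : Co E →ₗ[ℚ] Module.Dual ℚ ((singChainsQ (TopCat.of (MM X))).X i) :=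
  (res i).comp
    { toFun := fun f σ => f i (inc X σ)
      map_add' := fun _ _ => rfl
      map_smul' := fun _ _ => rfl : Co E →ₗ[ℚ] (C(Dl i, MM X) → ℚ) }

theorem resE_gn (i : ℕ) (f : Co E) (σ : C(Dl i, MM X)) : resE X i f (gn i σ) = f i (inc X σ) := by
  rw [resE, LinearMap.comp_apply, res_gn]; rfl

theorem resE_eq_zero (i : ℕ) (f : Co E) : resE X i f = 0 ↔ pr i f ∈ CX X := by
  constructor
  · intro h
    rw [mem_CX]
    intro m σ hσ
    rw [pr_apply]
    split_ifs with hm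
    · subst hm
      have := LinearMap.congr_fun h (gn m (⟨fun t => ⟨σ t, hσ t⟩, by fun_prop⟩ : C(Dl m, MM X)))
      rw [resE_gn] at this
      exact this
    · rfl
  · intro h
    apply ch_ext
    intro σ
    rw [resE_gn]
    rw [mem_CX] at h
    have := h i (inc X σ) (fun t => (σ t).2)
    rw [pr_apply, if_pos rfl] at this
    exact this

theorem face_inc {m : ℕ} (j : Fin (m+2)) (σ : C(Dl (m+1), MM X)) :
    face j (inc X σ) = inc X (face j σ) := by
  ext t
  rfl

theorem resE_delta (i : ℕ) (f : Co E) :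
    resE X (i+1) (delta f) = (resE X i f).comp ((singChainsQ (TopCat.of (MM X))).d (i+1) i).hom := by
  apply ch_ext
  intro σ
  rw [resE_gn, delta_succ, LinearMap.comp_apply, d_gn, map_sum]
  refine Finset.sum_congr rfl fun j _ => ?_
  rw [map_smul, resE_gn, face_inc, smul_eq_mul]

theorem resE_surj (i : ℕ) (φ : Module.Dual ℚ ((singChainsQ (TopCat.of (MM X))).X i)) :
    ∃ f : Co E, pr i f = f ∧ resE X i f = φ := by
  classical
  let f0 : Co E := fun m σ => if h : ∃ e : m = i, ∃ τ : C(Dl i, MM X), inc X τ = e ▸ σ then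
    φ (gn i h.2.choose) else 0
  refine ⟨f0, ?_, ?_⟩
  · funext m σ
    rw [pr_apply]
    split_ifs with h
    · rfl
    · symm
      exact dif_neg (fun h' => h h'.1)
  · apply ch_ext
    intro σ
    rw [resE_gn]
    have h : ∃ e : i = i, ∃ τ : C(Dl i, MM X), inc X τ = e ▸ (inc X σ) := ⟨rfl, σ, rfl⟩
    have h2 : f0 i (inc X σ) = φ (gn i h.2.choose) := dif_pos h
    rw [h2]
    have h3 := h.2.choose_spec
    have : h.2.choose = σ := by
      ext t
      exact congrArg (fun τ : C(Dl i, E) => τ t) h3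
    rw [this]

end ResE
end GM

namespace GM
open CategoryTheory Opposite

section Main
variable {P : Type} [PartialOrder P] [Fintype P] {E : Type} [NormedAddCommGroup E]
  [NormedSpace ℝ E] (A : Arr P E) (i : ℕ)

abbrev XX : Set E := ⋃ p, A.X p

def Tdeg (i : ℕ) : Submodule ℚ ℚ := if i = 0 then ⊤ else ⊥

theorem Tdeg_zero (t : Tdeg i) (h : i ≠ 0) : (t : ℚ) = 0 := by
  obtain ⟨t, ht⟩ := t
  rw [Tdeg, if_neg h, Submodule.mem_bot] at ht
  exact ht

theorem Tdeg_mem (t : ℚ) (h : i ≠ 0 → t = 0) : t ∈ Tdeg i := by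
  rw [Tdeg]
  split_ifs with h0
  · trivial
  · exact (Submodule.mem_bot ℚ).2 (h h0)

noncomputable abbrev Zc (p : PI A i) : Submodule ℚ (pchains {q // p.1 < q} (A.h p.1 - i - 1) →₀ ℚ) :=
  simpCycles ℚ ℚ {q // p.1 < q} (A.h p.1 - i - 1)

abbrev VV : Type := (∀ p : PI A i, Zc A i p) × Tdeg i

def Hq (p : PI A i) : Type := simpHomology ℚ ℚ {q // p.1 < q} (A.h p.1 - i - 1)

noncomputable instance (p : PI A i) : AddCommGroup (Hq A i p) :=
  inferInstanceAs (AddCommGroup (simpHomology ℚ ℚ {q // p.1 < q} (A.h p.1 - i - 1)))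

noncomputable instance (p : PI A i) : Module ℚ (Hq A i p) :=
  inferInstanceAs (Module ℚ (simpHomology ℚ ℚ {q // p.1 < q} (A.h p.1 - i - 1)))

noncomputable def Hmk (p : PI A i) : Zc A i p →ₗ[ℚ] Hq A i p :=
  Submodule.mkQ (Submodule.comap (Zc A i p).subtype
    (LinearMap.range (simpBdry ℚ ℚ {q // p.1 < q} (A.h p.1 - i - 1))))

abbrev WW : Type :=
  (∀ p : PI A i, Hq A i p) × Tdeg i

noncomputable def ppi : VV A i →ₗ[ℚ] WW A i :=
  LinearMap.prodMap (LinearMap.pi fun p => (Hmk A i p).comp (LinearMap.proj p)) LinearMap.id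

theorem ppi_surj : Function.Surjective (ppi A i) := by
  rintro ⟨w, t⟩
  choose z hz using fun p => Submodule.mkQ_surjective _ (w p)
  refine ⟨(z, t), ?_⟩
  refine Prod.ext ?_ rfl
  funext p
  exact hz p

theorem ppi_zero (v : VV A i) : ppi A i v = 0 ↔
    (∀ p, (v.1 p).1 ∈ LinearMap.range (simpBdry ℚ ℚ {q // p.1 < q} (A.h p.1 - i - 1))) ∧
      (v.2 : ℚ) = 0 := by
  rw [Prod.ext_iff, funext_iff]
  refine and_congr (forall_congr' fun p => ?_) ?_
  · refine (Submodule.Quotient.mk_eq_zero _).trans ?_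
    rfl
  · exact Submodule.coe_eq_zero.symm

def zz (v : VV A i) : ∀ p : PI A i, (pchains {q // p.1 < q} (A.h p.1 - i - 1) →₀ ℚ) :=
  fun p => (v.1 p).1

noncomputable def FF (x0 : E) : VV A i →ₗ[ℚ] Co E where
  toFun v := Kst x0 (A.psi (EE A i (zz A i v))) + (v.2 : ℚ) • one0
  map_add' v w := by
    have : zz A i (v + w) = zz A i v + zz A i w := rfl
    rw [this, EE_add, map_add, map_add, Prod.snd_add, Submodule.coe_add, add_smul]
    abel
  map_smul' r v := by
    have : zz A i (r • v) = r • zz A i v := rfl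
    rw [this, EE_smul, map_smul, map_smul, Prod.smul_snd, Submodule.coe_smul, smul_add, smul_assoc]
    rfl

theorem FF_apply (x0 : E) (v) : FF A i x0 v = Kst x0 (A.psi (EE A i (zz A i v))) + (v.2 : ℚ) • one0 :=
  rfl

theorem pr_FF (x0 : E) (v) : pr i (FF A i x0 v) = FF A i x0 v := by
  funext m σ
  rw [pr_apply]
  split_ifs with h
  · rfl
  · rw [FF_apply, ← pr_psi_EE]
    have h1 : m + 1 ≠ i + 1 := by omega
    simp only [Pi.add_apply, Kst_apply, pr_apply, if_neg h1, zero_add, Pi.smul_apply]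
    by_cases hi : i = 0
    · subst hi
      simp [one0, h]
    · rw [Tdeg_zero i v.2 hi, zero_smul]

theorem delta_FF (x0 : E) (v) : delta (FF A i x0 v) ∈ CX (XX A) := by
  rw [FF_apply, map_add, map_smul, delta_one0, smul_zero, add_zero, delta_Kst]
  · exact psi_memX A _
  · exact dG_EE A i _ (fun p => (v.1 p).2)

theorem resE_delta_ex (X : Set E) (g : Co E) : ∃ ξ : Module.Dual ℚ ((singChainsQ (TopCat.of (MM X))).X (i-1)),
    resE X i (delta g) = ξ.comp ((singChainsQ (TopCat.of (MM X))).d i (i-1)).hom := by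
  cases i with
  | zero =>
    refine ⟨0, ?_⟩
    apply ch_ext
    intro σ
    rw [resE_gn, delta_zero]
    rfl
  | succ k => exact ⟨resE X k g, resE_delta X k g⟩

theorem resE_delta_ex' (X : Set E) (ξ : Module.Dual ℚ ((singChainsQ (TopCat.of (MM X))).X (i-1))) :
    ∃ g : Co E, pr i (delta g) = delta g ∧
    resE X i (delta g) = ξ.comp ((singChainsQ (TopCat.of (MM X))).d i (i-1)).hom := by
  cases i with
  | zero =>
    refine ⟨0, by simp, ?_⟩
    have : (singChainsQ (TopCat.of (MM X))).d 0 (0-1) = 0 := by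
      apply HomologicalComplex.shape
      simp
    rw [this, map_zero, map_zero, ModuleCat.hom_zero, LinearMap.comp_zero]
  | succ k =>
    obtain ⟨f, h1, h2⟩ := resE_surj X k ξ
    refine ⟨f, ?_, ?_⟩
    · rw [← delta_pr, h1]
    · rw [resE_delta, h2]
      rfl

theorem res_CX (X : Set E) {c : Co E} (h : c ∈ CX X) : resE X i c = 0 :=
  (resE_eq_zero X i c).2 (pr_mem h i)

theorem main_arr (x0 : E) (hx0 : x0 ∉ XX A) :
    Module.finrank ℚ (singHomQ (TopCat.of (MM (XX A))) i) = Module.finrank ℚ (WW A i) := by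
  refine dual_lemma' (V := VV A i) (W := WW A i) (singChainsQ (TopCat.of (MM (XX A)))) i (ppi A i) (ppi_surj A i)
    ((resE (XX A) i).comp (FF A i x0)) ?_ ?_ ?_
  · intro v x
    have := res_CX (i+1) (XX A) (delta_FF A i x0 v)
    rw [resE_delta] at this
    exact LinearMap.congr_fun this x
  · intro φ hφ
    obtain ⟨f, hf1, hf2⟩ := resE_surj (XX A) i φ
    have h0 : resE (XX A) (i+1) (delta f) = 0 := by
      rw [resE_delta, hf2]
      exact LinearMap.ext hφ
    rw [resE_eq_zero, ← delta_pr, hf1] at h0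
    obtain ⟨z, hz, t, ht, g, c, hc, e⟩ := surj_part A i x0 f hf1 h0
    obtain ⟨ξ, hξ⟩ := resE_delta_ex i (XX A) g
    refine ⟨(fun p => ⟨z p, hz p⟩, ⟨t, Tdeg_mem i t ht⟩), ξ, ?_⟩
    rw [← hξ, ← hf2, e, map_add, map_add, res_CX i _ hc, add_zero]
    rfl
  · intro v
    rw [ppi_zero]
    constructor
    · rintro ⟨ξ, hξ⟩
      obtain ⟨g, hg1, hg2⟩ := resE_delta_ex' i (XX A) ξ
      rw [← hg2, LinearMap.comp_apply, ← sub_eq_zero, ← map_sub, resE_eq_zero, map_sub, pr_FF,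
        hg1] at hξ
      have := inj_part A i x0 hx0 (zz A i v) (fun p => (v.1 p).2) v.2 (Tdeg_zero i v.2) g _ hξ
        (by rw [FF_apply]; abel)
      exact ⟨this.2, this.1⟩
    · rintro ⟨h1, h2⟩
      obtain ⟨g, c, hc, e⟩ := inj_conv A i x0 hx0 (zz A i v) h1
      obtain ⟨ξ, hξ⟩ := resE_delta_ex i (XX A) g
      refine ⟨ξ, ?_⟩
      rw [← hξ, LinearMap.comp_apply, FF_apply, h2, zero_smul, add_zero, e, map_add,
        res_CX i _ hc, add_zero]

theorem finrank_WW : Module.finrank ℚ (WW A i) =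
    (∑ p : P, if i + 1 ≤ A.h p then
          Module.finrank ℚ (simpHomology ℚ ℚ {q : P // p < q} (A.h p - i - 1))
        else 0) + (if i = 0 then 1 else 0) := by
  classical
  have hfin : ∀ p : P, ∀ m, Module.Finite ℚ (simpHomology ℚ ℚ {q : P // p < q} m) := by
    intro p m
    have : Finite (pchains {q : P // p < q} m) := inferInstance
    infer_instance
  have hfin' : ∀ p : PI A i, Module.Finite ℚ (Hq A i p) := fun p => hfin _ _
  have e1 : Module.finrank ℚ (WW A i) =
    Module.finrank ℚ (∀ p : PI A i, Hq A i p) +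
      Module.finrank ℚ (Tdeg i) := Module.finrank_prod
  rw [e1, Module.finrank_pi_fintype]
  congr 1
  · rw [← Finset.sum_filter]
    symm
    exact Finset.sum_subtype (Finset.univ.filter fun p => i + 1 ≤ A.h p) (by simp)
      (fun p => Module.finrank ℚ (simpHomology ℚ ℚ {q : P // p < q} (A.h p - i - 1)))
  · split_ifs with h
    · rw [show Tdeg i = ⊤ from if_pos h]
      exact (finrank_top ℚ ℚ).trans (Module.finrank_self ℚ)
    · rw [show Tdeg i = ⊥ from if_neg h]
      exact finrank_bot ℚ ℚ

end Main
end GM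

/-- The Goresky–MacPherson formula for a real arrangement: for an arrangement `X ⊆ ℝⁿ` of
affine-linear subspaces with intersection poset `P` (with `S p` the subspace corresponding
to `p` and `h(p)` its codimension),
`dim_ℚ H̃ᵢ(ℝⁿ \ X; ℚ) = Σ_p dim_ℚ H̃_{h(p)-i-2}(K(>p); ℚ)`.
(Unreduced singular homology is used, whence the correction term `1` in degree `0`; the
summand for `p` vanishes when `h(p) - i - 2 < -1`, and `simpHomology … m` is `H̃_{m-1}`.) -/
theorem stmt_18 (n : ℕ) (P : Type) [PartialOrder P] [Fintype P]
    (S : P → AffineSubspace ℝ (Fin n → ℝ))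
    -- `P` is ordered by inclusion of the subspaces, which are nonempty and proper
    (horder : ∀ p q : P, p ≤ q ↔ S p ≤ S q)
    (hne : ∀ p : P, (S p : Set (Fin n → ℝ)).Nonempty)
    (hproper : ∀ p : P, S p ≠ ⊤)
    -- `P` is closed under nonempty intersections of irreducible components …
    (hclosed : ∀ T : Finset P, T.Nonempty → (∀ p ∈ T, IsMax p) →
      ((sInf (S '' ↑T) : AffineSubspace ℝ (Fin n → ℝ)) : Set (Fin n → ℝ)).Nonempty →
      ∃ q : P, S q = sInf (S '' ↑T))
    -- … and every element is the intersection of the components containing it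
    (hcomp : ∀ p : P, S p = sInf (S '' {m : P | IsMax m ∧ p ≤ m}))
    -- `h p` is the codimension of `S p`
    (ht : P → ℕ) (hht : ∀ p : P, ht p = n - Module.finrank ℝ (S p).direction) :
    ∀ i : ℕ,
      Module.finrank ℚ
        (singHomQ (TopCat.of {x : Fin n → ℝ // x ∉ ⋃ p : P, (S p : Set (Fin n → ℝ))}) i) =
      (∑ p : P,
        if i + 1 ≤ ht p then
          Module.finrank ℚ (simpHomology ℚ ℚ {q : P // p < q} (ht p - i - 1))
        else 0) +
      (if i = 0 then 1 else 0) := by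
  classical
  intro i
  choose s0 hs0 using hne
  have hset : ∀ p, (S p : Set (Fin n → ℝ)) = {x | x - s0 p ∈ (S p).direction} := by
    intro p
    ext x
    exact ((S p).vsub_right_mem_direction_iff_mem (hs0 p) x).symm
  have hle : ∀ p, Module.finrank ℝ (S p).direction ≤ n := by
    intro p
    have := Submodule.finrank_le (S p).direction
    rwa [Module.finrank_fin_fun] at this
  have hgen : ∀ p, ∃ a, GM.IsGen (S p : Set (Fin n → ℝ)) (ht p) a := by
    intro p
    rw [hset p]
    apply GM.isGen_sub
    rw [Module.finrank_fin_fun, hht]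
    have := hle p
    omega
  choose gen hgen using hgen
  let A : GM.Arr P (Fin n → ℝ) :=
    { X := fun p => (S p : Set (Fin n → ℝ))
      h := ht
      gen := gen
      closed := fun p => (S p).closed_of_finiteDimensional
      mono := fun p q h => (horder p q).1 h
      anti := by
        intro p q h
        have hlt : S p < S q :=
          lt_of_le_not_ge ((horder p q).1 h.le) (fun h' => h.not_ge ((horder q p).2 h'))
        have h1 := AffineSubspace.direction_lt_of_nonempty hlt ⟨s0 p, hs0 p⟩
        have h2 := Submodule.finrank_lt_finrank_of_lt h1
        have h3 := hle q
        rw [hht, hht]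
        omega
      inter := by
        intro p q x hp hq
        let T : Finset P := Finset.univ.filter fun m => IsMax m ∧ (p ≤ m ∨ q ≤ m)
        have hT : T.Nonempty := by
          by_contra h
          rw [Finset.not_nonempty_iff_eq_empty] at h
          apply hproper p
          rw [hcomp p, eq_top_iff]
          apply le_sInf
          rintro _ ⟨m, hm, rfl⟩
          have : m ∈ T := Finset.mem_filter.2 ⟨Finset.mem_univ _, hm.1, Or.inl hm.2⟩
          rw [h] at this
          simp at this
        have hx : x ∈ (sInf (S '' ↑T) : AffineSubspace ℝ (Fin n → ℝ)) := by
          rw [AffineSubspace.mem_sInf_iff]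
          rintro _ ⟨m, hm, rfl⟩
          rcases (Finset.mem_filter.1 hm).2.2 with h | h
          · exact (horder _ _).1 h hp
          · exact (horder _ _).1 h hq
        obtain ⟨r, hr⟩ := hclosed T hT (fun m hm => (Finset.mem_filter.1 hm).2.1) ⟨x, hx⟩
        refine ⟨r, ?_, ?_, ?_⟩
        · rw [horder, hr, hcomp p]
          apply sInf_le_sInf
          apply Set.image_mono
          intro m hm
          exact Finset.mem_coe.2 (Finset.mem_filter.2 ⟨Finset.mem_univ _, hm.1, Or.inl hm.2⟩)
        · rw [horder, hr, hcomp q]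
          apply sInf_le_sInf
          apply Set.image_mono
          intro m hm
          exact Finset.mem_coe.2 (Finset.mem_filter.2 ⟨Finset.mem_univ _, hm.1, Or.inr hm.2⟩)
        · change x ∈ S r
          rw [hr]
          exact hx
      isgen := hgen }
  have hx0 : ∃ x0 : Fin n → ℝ, x0 ∉ GM.XX A := by
    by_contra! h
    have h1 : MeasureTheory.volume (⋃ p, (S p : Set (Fin n → ℝ))) = 0 :=
      MeasureTheory.measure_iUnion_null fun p =>
        MeasureTheory.Measure.addHaar_affineSubspace _ (S p) (hproper p)
    have h2 : (⋃ p, (S p : Set (Fin n → ℝ))) = Set.univ := Set.eq_univ_of_forall h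
    rw [h2] at h1
    exact (isOpen_univ.measure_pos MeasureTheory.volume Set.univ_nonempty).ne' h1
  obtain ⟨x0, hx0⟩ := hx0
  exact (GM.main_arr A i x0 hx0).trans (GM.finrank_WW A i)
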